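/- arXiv:math/0610511 — 2 statements merged into one kernel-verified Lean document; each statement's English description precedes it below -/
import Mathlib

section
/- Let p ≥ 2 and let {Y_k : k ≤ n}, with n ∈ ℕ^d, be a negatively associated field of random variables with E[Y_k] = 0 and E[|Y_k|^p] < ∞ for every k ≤ n. Then E| Σ_{i ≤ n} Y_i |^p ≤ 2 (15p / ln p)^p { ( Σ_{i ≤ n} E[Y_i²] )^{p/2} + Σ_{i ≤ n} E[|Y_i|^p] }. -/
/-!
The inequality is proved for the positive part of the sum and then applied to `Y` and to `-Y`,
which is again negatively associated.

Let `B` be the sum of the second moments, `A` the sum of the `p`-th absolute moments, and choose the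
truncation level `σ` by `σ ^ p = B ^ (p / 2) + A`, so that `B ≤ σ ^ 2` and `A ≤ σ ^ p`. Write
`Y i = min (Y i) σ + max (Y i - σ) 0`. Both pieces are non-decreasing functions of `Y i`, so negative
association applies to each.

* Truncated piece (`trunc_part`). Since `u ^ p ≤ (p / (e l)) ^ p * exp (l u)`, it is enough to bound
  the exponential moment of the truncated sum at `l = ln p / (2 σ)`. By negative association this is
  at most the product of the individual exponential moments (`NegAssocOn.integral_prod_le`), which a
  second-order expansion bounds by `exp (l ^ 2 * exp (l σ) * B) ≤ exp p`. The result is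
  `(2 p / ln p) ^ p * σ ^ p`.
* Excess piece (`excess_part`). With `N` the number of `i` such that `Y i > σ`, the power mean
  inequality bounds the `p`-th power of the total excess by `N ^ (p - 1)` times the sum of the `p`-th
  powers of the excesses. For fixed `i`, the exceedances at the other indices and the excess of `Y i`
  are negatively correlated, so the expectation is at most `E (1 + N) ^ p * A`, and
  `E (1 + N) ^ p ≤ (2 p / ln p) ^ p` again by an exponential moment (`excess_count`).

Together these give the constant `2 (4 p / ln p) ^ p`.
-/

open MeasureTheory Filter Finset

noncomputable section

/-- `plog x = ln (max x e)`, the truncated logarithm used in the paper. -/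
def plog (x : ℝ) : ℝ := Real.log (max x (Real.exp 1))

/-- A family of real random variables `X i`, `i ∈ S`, is *negatively associated* if for every
pair of disjoint finite subsets `A`, `B` of `S` and all coordinatewise non-decreasing functions
`f`, `g`, one has `Cov (f (X_i, i ∈ A), g (X_j, j ∈ B)) ≤ 0`, whenever the covariance exists. -/
def NegAssocOn {Ω : Type} [MeasurableSpace Ω] (μ : Measure Ω) {ι : Type}
    (X : ι → Ω → ℝ) (S : Set ι) : Prop :=
  ∀ A B : Finset ι, ↑A ⊆ S → ↑B ⊆ S → Disjoint A B →
    ∀ (f : (↥A → ℝ) → ℝ) (g : (↥B → ℝ) → ℝ), Monotone f → Monotone g →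
      Integrable (fun ω => f (fun i => X i ω)) μ →
      Integrable (fun ω => g (fun j => X j ω)) μ →
      Integrable (fun ω => f (fun i => X i ω) * g (fun j => X j ω)) μ →
      ∫ ω, f (fun i => X i ω) * g (fun j => X j ω) ∂μ ≤
        (∫ ω, f (fun i => X i ω) ∂μ) * ∫ ω, g (fun j => X j ω) ∂μ

/-- Polynomial growth against exponential growth, with the sharp constant: `e t ≤ e ^ t` applied to
`t = l u / p`. -/
lemma rpow_le_mul_exp {u l p : ℝ} (hu : 0 ≤ u) (hl : 0 < l) (hp : 0 < p) :
    u ^ p ≤ (p / (Real.exp 1 * l)) ^ p * Real.exp (l * u) := by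
  have h := Real.exp_one_mul_le_exp (x := l * u / p)
  have he := Real.exp_pos 1
  have h1 : u ≤ p / (Real.exp 1 * l) * Real.exp (l * u / p) := by
    calc u = p / (Real.exp 1 * l) * (Real.exp 1 * (l * u / p)) := by field_simp
      _ ≤ _ := by gcongr
  calc u ^ p ≤ (p / (Real.exp 1 * l) * Real.exp (l * u / p)) ^ p :=
        Real.rpow_le_rpow hu h1 hp.le
    _ = _ := by
        rw [Real.mul_rpow (by positivity) (Real.exp_pos _).le, ← Real.exp_mul]
        congr 2
        field_simp

/-- A second-order bound on `exp` that only needs `t` bounded above, so it applies to variables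
truncated from above. -/
lemma exp_le_quadratic {t s : ℝ} (hts : t ≤ s) (hs : 0 ≤ s) :
    Real.exp t ≤ 1 + t + t ^ 2 * Real.exp s := by
  have hs1 : 1 ≤ Real.exp s := Real.one_le_exp hs
  have hsq := sq_nonneg t
  rcases le_total t (-1) with h | h
  · have : Real.exp t ≤ 1 := Real.exp_le_one_iff.2 (by linarith)
    nlinarith
  rcases le_total t 1 with h' | h'
  · have := (abs_le.1 (Real.abs_exp_sub_one_sub_id_le (abs_le.2 ⟨h, h'⟩))).2
    nlinarith
  · have h1 : Real.exp t ≤ Real.exp s := Real.exp_le_exp.2 hts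
    have h2 : (1 : ℝ) ≤ t ^ 2 := by nlinarith
    nlinarith

/-- With `l σ = ln p / 2`, the exponent `(l σ)² exp (l σ)` of the truncated sum is at most `p`;
equivalently `ln p ≤ 2 p ^ (1/4)`. -/
lemma sqrt_mul_log_sq_le {p : ℝ} (hp : 2 ≤ p) :
    (Real.log p / 2) ^ 2 * Real.exp (Real.log p / 2) ≤ p := by
  have hL : 0 < Real.log p := Real.log_pos (by linarith)
  have h := Real.exp_one_mul_le_exp (x := Real.log p / 4)
  have he : 2 < Real.exp 1 := by linarith [Real.exp_one_gt_d9]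
  have h1 : Real.log p / 2 ≤ Real.exp (Real.log p / 4) := by nlinarith
  calc (Real.log p / 2) ^ 2 * Real.exp (Real.log p / 2)
      ≤ Real.exp (Real.log p / 4) ^ 2 * Real.exp (Real.log p / 2) := by gcongr
    _ = Real.exp (Real.log p) := by
        rw [← Real.exp_nat_mul, ← Real.exp_add]; congr 1; push_cast; ring
    _ = p := Real.exp_log (by linarith)

section Field

variable {Ω : Type} [MeasurableSpace Ω] {μ : Measure Ω} {ι : Type}

lemma NegAssocOn.neg {X : ι → Ω → ℝ} {S : Set ι} (h : NegAssocOn μ X S) :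
    NegAssocOn μ (fun i ω => -X i ω) S := by
  intro A B hA hB hAB f g hf hg If Ig Ifg
  have := h A B hA hB hAB (fun v => -f (fun i => -v i)) (fun v => -g (fun i => -v i))
    (fun v w hvw => neg_le_neg (hf fun i => neg_le_neg (hvw i)))
    (fun v w hvw => neg_le_neg (hg fun i => neg_le_neg (hvw i)))
    If.neg Ig.neg (by simpa only [neg_mul_neg] using Ifg)
  simpa only [neg_mul_neg, integral_neg] using this

lemma integrable_prod_comp [IsProbabilityMeasure μ] {X : ι → Ω → ℝ} {h : ℝ → ℝ} {C : ℝ}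
    (hmono : Monotone h) (h0 : ∀ x, 0 ≤ h x) (hC : ∀ x, h x ≤ C)
    (t : Finset ι) (hmeas : ∀ i ∈ t, Measurable (X i)) :
    Integrable (fun ω => ∏ i ∈ t, h (X i ω)) μ := by
  refine Integrable.of_bound (C := C ^ #t)
    (Finset.measurable_fun_prod _ fun i hi =>
      hmono.measurable.comp (hmeas i hi)).aestronglyMeasurable ?_
  refine Eventually.of_forall fun ω => ?_
  rw [Real.norm_of_nonneg (Finset.prod_nonneg fun i _ => h0 _)]
  exact (Finset.prod_le_prod (fun i _ => h0 _) fun i _ => hC _).trans_eq (by simp)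

/-- Negative association bounds the mixed moment of one bounded nonnegative non-decreasing function
by the value it would have under independence. -/
lemma NegAssocOn.integral_prod_le [IsProbabilityMeasure μ] {X : ι → Ω → ℝ} {S : Finset ι}
    (hNA : NegAssocOn μ X S) (hmeas : ∀ i ∈ S, Measurable (X i)) {h : ℝ → ℝ} {C : ℝ}
    (hmono : Monotone h) (h0 : ∀ x, 0 ≤ h x) (hC : ∀ x, h x ≤ C) :
    ∫ ω, ∏ i ∈ S, h (X i ω) ∂μ ≤ ∏ i ∈ S, ∫ ω, h (X i ω) ∂μ := by
  classical
  suffices H : ∀ t ⊆ S, ∫ ω, ∏ i ∈ t, h (X i ω) ∂μ ≤ ∏ i ∈ t, ∫ ω, h (X i ω) ∂μ from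
    H S subset_rfl
  intro t
  induction t using Finset.induction_on with
  | empty => simp
  | insert a t ha ih =>
    intro hsub
    rw [Finset.insert_subset_iff] at hsub
    have I1 : Integrable (fun ω => h (X a ω)) μ := by
      simpa using integrable_prod_comp (μ := μ) (X := X) hmono h0 hC {a}
        (by simpa using hmeas a hsub.1)
    have I2 := integrable_prod_comp (μ := μ) (X := X) hmono h0 hC t
      (fun i hi => hmeas i (hsub.2 hi))
    have I3 := integrable_prod_comp (μ := μ) (X := X) hmono h0 hC (insert a t)
      (fun i hi => hmeas i (Finset.insert_subset hsub.1 hsub.2 hi))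
    simp only [Finset.prod_insert ha] at I3 ⊢
    have e : ∀ ω, ∏ i : t, h (X i ω) = ∏ i ∈ t, h (X i ω) := fun ω =>
      Finset.prod_coe_sort t (fun i => h (X i ω))
    have key := hNA {a} t (by simpa using hsub.1) (by exact_mod_cast hsub.2) (by simpa using ha)
      (fun v => h (v ⟨a, by simp⟩)) (fun v => ∏ i : t, h (v i))
      (fun v w hvw => hmono (hvw _))
      (fun v w hvw => Finset.prod_le_prod (fun i _ => h0 _) fun i _ => hmono (hvw i))
      I1 (by simpa only [e] using I2) (by simpa only [e] using I3)
    simp only [e] at key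
    exact key.trans (mul_le_mul_of_nonneg_left (ih hsub.2) (integral_nonneg fun ω => h0 _))

/-- The sum of the variables truncated from above at `σ`, where `σ²` dominates the total variance.
It is controlled through its exponential moment at `l = ln p / (2 σ)`, which is at most `e ^ p`. -/
lemma trunc_part [IsProbabilityMeasure μ] {X : ι → Ω → ℝ} {S : Finset ι}
    (hNA : NegAssocOn μ X S) (hmeas : ∀ i ∈ S, Measurable (X i))
    (hmean : ∀ i ∈ S, ∫ ω, X i ω ∂μ = 0) (hL1 : ∀ i ∈ S, Integrable (X i) μ)
    (hL2 : ∀ i ∈ S, Integrable (fun ω => X i ω ^ 2) μ)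
    {p σ : ℝ} (hp : 2 ≤ p) (hσ : 0 < σ) (hB : ∑ i ∈ S, ∫ ω, X i ω ^ 2 ∂μ ≤ σ ^ 2) :
    Integrable (fun ω => max (∑ i ∈ S, min (X i ω) σ) 0 ^ p) μ ∧
    ∫ ω, max (∑ i ∈ S, min (X i ω) σ) 0 ^ p ∂μ ≤ (2 * p / Real.log p) ^ p * σ ^ p := by
  have hL : 0 < Real.log p := Real.log_pos (by linarith)
  have he := Real.exp_pos 1
  have hp0 : 0 < p := by linarith
  set l : ℝ := Real.log p / 2 / σ with hl
  have hl0 : 0 < l := by positivity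
  have hlσ : l * σ = Real.log p / 2 := by rw [hl]; field_simp
  set h : ℝ → ℝ := fun x => Real.exp (l * min x σ) with hh
  have hmono : Monotone h := fun x y hxy => Real.exp_le_exp.2 (by gcongr)
  have h0 : ∀ x, 0 ≤ h x := fun x => (Real.exp_pos _).le
  have hC : ∀ x, h x ≤ Real.exp (l * σ) := fun x =>
    Real.exp_le_exp.2 (mul_le_mul_of_nonneg_left (min_le_right _ _) hl0.le)
  set c : ℝ := (p / (Real.exp 1 * l)) ^ p with hc
  have hc0 : 0 ≤ c := by positivity
  have hpt : ∀ ω, max (∑ i ∈ S, min (X i ω) σ) 0 ^ p ≤ c * ∏ i ∈ S, h (X i ω) := by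
    intro ω
    have hprod : ∏ i ∈ S, h (X i ω) = Real.exp (l * ∑ i ∈ S, min (X i ω) σ) := by
      rw [Finset.mul_sum, Real.exp_sum]
    rw [hprod]
    rcases le_total (∑ i ∈ S, min (X i ω) σ) 0 with h' | h'
    · rw [max_eq_right h', Real.zero_rpow hp0.ne']; positivity
    · rw [max_eq_left h']; exact rpow_le_mul_exp h' hl0 hp0
  have Iprod := (integrable_prod_comp (μ := μ) (X := X) hmono h0 hC S hmeas).const_mul c
  have hM : Measurable (fun ω => max (∑ i ∈ S, min (X i ω) σ) 0 ^ p) :=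
    ((Finset.measurable_fun_sum _ fun i hi =>
      (hmeas i hi).min measurable_const).max measurable_const).pow_const p
  have hnn : ∀ ω, 0 ≤ max (∑ i ∈ S, min (X i ω) σ) 0 ^ p := fun ω => by positivity
  have hint : Integrable (fun ω => max (∑ i ∈ S, min (X i ω) σ) 0 ^ p) μ :=
    Iprod.mono' hM.aestronglyMeasurable (Eventually.of_forall fun ω => by
      rw [Real.norm_of_nonneg (hnn ω)]; exact hpt ω)
  refine ⟨hint, ?_⟩
  have hone : ∀ i ∈ S, ∫ ω, h (X i ω) ∂μ ≤
      Real.exp (l ^ 2 * Real.exp (l * σ) * ∫ ω, X i ω ^ 2 ∂μ) := by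
    intro i hi
    -- The linear term is `l * x`, not `l * min x σ`: it has mean zero after integration.
    have hx : ∀ x, h x ≤ 1 + l * x + l ^ 2 * Real.exp (l * σ) * x ^ 2 := by
      intro x
      have h1 := exp_le_quadratic (t := l * min x σ) (s := l * σ)
        (mul_le_mul_of_nonneg_left (min_le_right _ _) hl0.le) (by positivity)
      have h2 : min x σ ≤ x := min_le_left _ _
      have h3 : (min x σ) ^ 2 ≤ x ^ 2 := by
        rcases le_total x σ with h' | h'
        · rw [min_eq_left h']
        · rw [min_eq_right h']; gcongr
      calc h x ≤ 1 + l * min x σ + (l * min x σ) ^ 2 * Real.exp (l * σ) := h1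
        _ = 1 + l * min x σ + l ^ 2 * Real.exp (l * σ) * (min x σ) ^ 2 := by ring
        _ ≤ _ := by gcongr
    have J1 : Integrable (fun ω => 1 + l * X i ω) μ :=
      (integrable_const _).add ((hL1 i hi).const_mul l)
    have J2 := (hL2 i hi).const_mul (l ^ 2 * Real.exp (l * σ))
    calc ∫ ω, h (X i ω) ∂μ
        ≤ ∫ ω, (1 + l * X i ω) + l ^ 2 * Real.exp (l * σ) * X i ω ^ 2 ∂μ :=
          integral_mono_of_nonneg (Eventually.of_forall fun ω => h0 _) (J1.add J2)
            (Eventually.of_forall fun ω => hx _)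
      _ = l ^ 2 * Real.exp (l * σ) * ∫ ω, X i ω ^ 2 ∂μ + 1 := by
          rw [integral_add J1 J2,
            integral_add (integrable_const _) ((hL1 i hi).const_mul l), integral_const_mul,
            integral_const_mul, hmean i hi]
          simp [add_comm]
      _ ≤ _ := Real.add_one_le_exp _
  have hprod : ∫ ω, ∏ i ∈ S, h (X i ω) ∂μ ≤ Real.exp p := by
    calc ∫ ω, ∏ i ∈ S, h (X i ω) ∂μ ≤ ∏ i ∈ S, ∫ ω, h (X i ω) ∂μ :=
          hNA.integral_prod_le hmeas hmono h0 hC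
      _ ≤ ∏ i ∈ S, Real.exp (l ^ 2 * Real.exp (l * σ) * ∫ ω, X i ω ^ 2 ∂μ) :=
          Finset.prod_le_prod (fun i _ => integral_nonneg fun ω => h0 _) hone
      _ = Real.exp (l ^ 2 * Real.exp (l * σ) * ∑ i ∈ S, ∫ ω, X i ω ^ 2 ∂μ) := by
          rw [Finset.mul_sum, Real.exp_sum]
      _ ≤ Real.exp p := by
          refine Real.exp_le_exp.2 ?_
          calc _ ≤ l ^ 2 * Real.exp (l * σ) * σ ^ 2 := by gcongr
            _ = (l * σ) ^ 2 * Real.exp (l * σ) := by ring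
            _ ≤ p := by rw [hlσ]; exact sqrt_mul_log_sq_le hp
  calc _ ≤ ∫ ω, c * ∏ i ∈ S, h (X i ω) ∂μ := integral_mono hint Iprod hpt
    _ = c * ∫ ω, ∏ i ∈ S, h (X i ω) ∂μ := integral_const_mul _ _
    _ ≤ c * Real.exp p := by gcongr
    _ = _ := by
        rw [hc, ← Real.mul_rpow (by positivity) hσ.le, show Real.exp p = Real.exp 1 ^ p by
          rw [← Real.exp_mul, one_mul], ← Real.mul_rpow (by positivity) he.le, hl]
        congr 1
        field_simp

/-- Moment bound for the number of indices exceeding the level `σ`: when `σ ^ p` dominates the total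
`p`-th moment, the expected number of exceedances is at most `1`, and negative association makes the
exponential moment at `ln p` no larger than in the Poisson case. -/
lemma excess_count [IsProbabilityMeasure μ] {X : ι → Ω → ℝ} {S : Finset ι}
    (hNA : NegAssocOn μ X S) (hmeas : ∀ i ∈ S, Measurable (X i))
    {p σ : ℝ} (hp : 2 ≤ p) (hσ : 0 < σ)
    (hLp : ∀ i ∈ S, Integrable (fun ω => |X i ω| ^ p) μ)
    (hA : ∑ i ∈ S, ∫ ω, |X i ω| ^ p ∂μ ≤ σ ^ p) :
    ∫ ω, (1 + ∑ i ∈ S, if σ < X i ω then (1 : ℝ) else 0) ^ p ∂μ ≤ (2 * p / Real.log p) ^ p := by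
  have hL : 0 < Real.log p := Real.log_pos (by linarith)
  have he := Real.exp_pos 1
  have hp0 : 0 < p := by linarith
  have hσp : 0 < σ ^ p := by positivity
  set h : ℝ → ℝ := fun x => if σ < x then p else 1 with hh
  have hmono : Monotone h := by
    intro x y hxy
    simp only [hh]
    split_ifs <;> linarith
  have h0 : ∀ x, 0 ≤ h x := fun x => by simp only [hh]; split_ifs <;> linarith
  have hC : ∀ x, h x ≤ p := fun x => by simp only [hh]; split_ifs <;> linarith
  set c : ℝ := (p / (Real.exp 1 * Real.log p)) ^ p * p with hc
  have hc0 : 0 ≤ c := by positivity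
  have hN0 : ∀ ω, 0 ≤ ∑ i ∈ S, if σ < X i ω then (1 : ℝ) else 0 := fun ω =>
    Finset.sum_nonneg fun i _ => by split_ifs <;> norm_num
  have hpt : ∀ ω, (1 + ∑ i ∈ S, if σ < X i ω then (1 : ℝ) else 0) ^ p ≤
      c * ∏ i ∈ S, h (X i ω) := by
    intro ω
    refine (rpow_le_mul_exp (add_nonneg zero_le_one (hN0 ω)) hL hp0).trans_eq ?_
    rw [hc, mul_add, mul_one, Real.exp_add, Real.exp_log hp0, Finset.mul_sum, Real.exp_sum,
      ← mul_assoc]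
    congr 1
    refine Finset.prod_congr rfl fun i _ => ?_
    simp only [hh]
    split_ifs
    · rw [mul_one, Real.exp_log hp0]
    · simp
  have Iprod := (integrable_prod_comp (μ := μ) (X := X) hmono h0 hC S hmeas).const_mul c
  -- Markov's inequality at level `σ`, in integrated form.
  have hone : ∀ i ∈ S, ∫ ω, h (X i ω) ∂μ ≤ Real.exp (p / σ ^ p * ∫ ω, |X i ω| ^ p ∂μ) := by
    intro i hi
    have hx : ∀ x, h x ≤ p / σ ^ p * |x| ^ p + 1 := by
      intro x
      simp only [hh]
      split_ifs with hx
      · have : σ ^ p ≤ |x| ^ p := by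
          have : σ ≤ |x| := hx.le.trans (le_abs_self x)
          gcongr
        have : p ≤ p / σ ^ p * |x| ^ p := by
          rw [div_mul_eq_mul_div, le_div_iff₀ hσp]; gcongr
        linarith
      · have : 0 ≤ p / σ ^ p * |x| ^ p := by positivity
        linarith
    have J := (hLp i hi).const_mul (p / σ ^ p)
    calc ∫ ω, h (X i ω) ∂μ
        ≤ ∫ ω, p / σ ^ p * |X i ω| ^ p + 1 ∂μ :=
          integral_mono_of_nonneg (Eventually.of_forall fun ω => h0 _)
            (J.add (integrable_const _)) (Eventually.of_forall fun ω => hx _)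
      _ = p / σ ^ p * ∫ ω, |X i ω| ^ p ∂μ + 1 := by
          rw [integral_add J (integrable_const _), integral_const_mul]; simp
      _ ≤ _ := Real.add_one_le_exp _
  have hprod : ∫ ω, ∏ i ∈ S, h (X i ω) ∂μ ≤ Real.exp p := by
    calc ∫ ω, ∏ i ∈ S, h (X i ω) ∂μ ≤ ∏ i ∈ S, ∫ ω, h (X i ω) ∂μ :=
          hNA.integral_prod_le hmeas hmono h0 hC
      _ ≤ ∏ i ∈ S, Real.exp (p / σ ^ p * ∫ ω, |X i ω| ^ p ∂μ) :=
          Finset.prod_le_prod (fun i _ => integral_nonneg fun ω => h0 _) hone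
      _ = Real.exp (p / σ ^ p * ∑ i ∈ S, ∫ ω, |X i ω| ^ p ∂μ) := by
          rw [Finset.mul_sum, Real.exp_sum]
      _ ≤ Real.exp p := by
          refine Real.exp_le_exp.2 ?_
          rw [div_mul_eq_mul_div, div_le_iff₀ hσp]; gcongr
  have hp2 : p ≤ 2 ^ p := by
    have h1 := one_add_mul_self_le_rpow_one_add (s := 1) (p := p) (by norm_num) (by linarith)
    norm_num at h1
    linarith
  calc _ ≤ ∫ ω, c * ∏ i ∈ S, h (X i ω) ∂μ :=
        integral_mono_of_nonneg (Eventually.of_forall fun ω =>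
          Real.rpow_nonneg (add_nonneg zero_le_one (hN0 ω)) p) Iprod
          (Eventually.of_forall hpt)
    _ = c * ∫ ω, ∏ i ∈ S, h (X i ω) ∂μ := integral_const_mul _ _
    _ ≤ c * Real.exp p := by gcongr
    _ = p * (p / Real.log p) ^ p := by
        rw [hc, mul_right_comm, show Real.exp p = Real.exp 1 ^ p by
          rw [← Real.exp_mul, one_mul], ← Real.mul_rpow (by positivity) he.le, mul_comm]
        congr 2
        field_simp
    _ ≤ 2 ^ p * (p / Real.log p) ^ p := by gcongr
    _ = _ := by rw [← Real.mul_rpow (by norm_num) (by positivity), mul_div_assoc]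

/-- The sum of the excesses over `σ`. By the power mean inequality its `p`-th power is at most
`N ^ (p - 1)` times the sum of the `p`-th powers of the excesses, `N` being the number of
exceedances. For each `i` one has `N ≤ 1 + N_i`, where `N_i` counts the exceedances at indices other
than `i`; negative association then decouples `N_i` from the excess at `i`. -/
lemma excess_part [IsProbabilityMeasure μ] {X : ι → Ω → ℝ} {S : Finset ι}
    (hNA : NegAssocOn μ X S) (hmeas : ∀ i ∈ S, Measurable (X i))
    {p σ : ℝ} (hp : 2 ≤ p) (hσ : 0 < σ)
    (hLp : ∀ i ∈ S, Integrable (fun ω => |X i ω| ^ p) μ)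
    (hA : ∑ i ∈ S, ∫ ω, |X i ω| ^ p ∂μ ≤ σ ^ p) :
    Integrable (fun ω => (∑ i ∈ S, max (X i ω - σ) 0) ^ p) μ ∧
    ∫ ω, (∑ i ∈ S, max (X i ω - σ) 0) ^ p ∂μ ≤
      (2 * p / Real.log p) ^ p * ∑ i ∈ S, ∫ ω, |X i ω| ^ p ∂μ := by
  classical
  have hL : 0 < Real.log p := Real.log_pos (by linarith)
  have hp0 : 0 < p := by linarith
  set J : ℝ → ℝ := fun x => if σ < x then (1 : ℝ) else 0 with hJ
  have hJmono : Monotone J := by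
    intro x y hxy
    simp only [hJ]
    split_ifs <;> linarith
  have hJ0 : ∀ x, 0 ≤ J x := fun x => by simp only [hJ]; split_ifs <;> norm_num
  have hJ1 : ∀ x, J x ≤ 1 := fun x => by simp only [hJ]; split_ifs <;> norm_num
  set w : ℝ → ℝ := fun x => max (x - σ) 0 ^ p with hw
  have hwmono : Monotone w := fun x y hxy => by
    simp only [hw]; gcongr
  have hw0 : ∀ x, 0 ≤ w x := fun x => by simp only [hw]; positivity
  have hwle : ∀ x, w x ≤ |x| ^ p := fun x => by
    have : max (x - σ) 0 ≤ |x| := max_le (by linarith [le_abs_self x]) (abs_nonneg x)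
    simp only [hw]; gcongr
  -- `V i` is `(1 + N_i) ^ (p - 1)`.
  set V : ι → Ω → ℝ := fun i ω => (1 + ∑ j ∈ S.erase i, J (X j ω)) ^ (p - 1) with hV
  have hNe0 : ∀ (t : Finset ι) ω, 0 ≤ ∑ j ∈ t, J (X j ω) := fun t ω =>
    Finset.sum_nonneg fun j _ => hJ0 _
  have hVnn : ∀ i ω, 0 ≤ V i ω := fun i ω =>
    Real.rpow_nonneg (add_nonneg zero_le_one (hNe0 _ ω)) _
  have hNc : ∀ t ⊆ S, ∀ ω, 1 + ∑ j ∈ t, J (X j ω) ≤ 1 + #S := by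
    intro t ht ω
    have h1 : ∑ j ∈ t, J (X j ω) ≤ ∑ j ∈ t, 1 := Finset.sum_le_sum fun j _ => hJ1 _
    have h2 : (#t : ℝ) ≤ #S := by exact_mod_cast Finset.card_le_card ht
    simp at h1
    linarith
  have hJmeas : ∀ t ⊆ S, Measurable fun ω => 1 + ∑ j ∈ t, J (X j ω) := fun t ht =>
    (Finset.measurable_fun_sum _ fun j hj =>
      hJmono.measurable.comp (hmeas j (ht hj))).const_add 1
  have hVmeas : ∀ i, Measurable (V i) := fun i => (hJmeas _ (Finset.erase_subset i S)).pow_const _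
  have hVb : ∀ i ω, ‖V i ω‖ ≤ (1 + #S : ℝ) ^ (p - 1) := by
    intro i ω
    rw [Real.norm_of_nonneg (hVnn i ω)]
    exact Real.rpow_le_rpow (add_nonneg zero_le_one (hNe0 _ ω))
      (hNc _ (Finset.erase_subset i S) ω) (by linarith)
  have hVint : ∀ i, Integrable (V i) μ := fun i =>
    Integrable.of_bound (hVmeas i).aestronglyMeasurable _ (Eventually.of_forall (hVb i))
  have hwmeas : ∀ i ∈ S, Measurable fun ω => w (X i ω) := fun i hi =>
    hwmono.measurable.comp (hmeas i hi)
  have hwint : ∀ i ∈ S, Integrable (fun ω => w (X i ω)) μ := fun i hi =>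
    (hLp i hi).mono' (hwmeas i hi).aestronglyMeasurable (Eventually.of_forall fun ω => by
      rw [Real.norm_of_nonneg (hw0 _)]; exact hwle _)
  have hwV : ∀ i ∈ S, Integrable (fun ω => w (X i ω) * V i ω) μ := fun i hi =>
    (hwint i hi).mul_bdd (hVmeas i).aestronglyMeasurable (Eventually.of_forall (hVb i))
  have hpt : ∀ ω, (∑ i ∈ S, max (X i ω - σ) 0) ^ p ≤ ∑ i ∈ S, w (X i ω) * V i ω := by
    intro ω
    have e1 : ∑ i ∈ S, max (X i ω - σ) 0 =
        ∑ i ∈ S with σ < X i ω, max (X i ω - σ) 0 := by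
      rw [Finset.sum_filter]
      refine Finset.sum_congr rfl fun i _ => ?_
      split_ifs with h
      · rfl
      · exact max_eq_right (by linarith)
    have e2 : ((#{i ∈ S | σ < X i ω} : ℕ) : ℝ) = ∑ i ∈ S, J (X i ω) := by
      simp [hJ]
    have h1 := Real.rpow_sum_le_const_mul_sum_rpow_of_nonneg {i ∈ S | σ < X i ω}
      (f := fun i => max (X i ω - σ) 0) (p := p) (by linarith) (fun i _ => le_max_right _ _)
    rw [e1]
    refine h1.trans ?_
    rw [e2, Finset.mul_sum]
    refine (Finset.sum_le_sum_of_subset_of_nonneg (Finset.filter_subset _ S) fun i _ _ =>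
      mul_nonneg (Real.rpow_nonneg (hNe0 S ω) _) (hw0 _)).trans ?_
    refine Finset.sum_le_sum fun i hi => ?_
    rw [mul_comm]
    refine mul_le_mul_of_nonneg_left ?_ (hw0 _)
    refine Real.rpow_le_rpow (hNe0 S ω) ?_ (by linarith)
    rw [← Finset.add_sum_erase S (fun j => J (X j ω)) hi]
    linarith [hJ1 (X i ω)]
  have hVle : ∀ i ∈ S, ∫ ω, V i ω ∂μ ≤ (2 * p / Real.log p) ^ p := by
    intro i hi
    refine le_trans ?_ (excess_count hNA hmeas hp hσ hLp hA)
    refine integral_mono_of_nonneg (Eventually.of_forall (hVnn i)) ?_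
      (Eventually.of_forall fun ω => ?_)
    · refine Integrable.of_bound (C := (1 + #S : ℝ) ^ p)
        ((hJmeas S subset_rfl).pow_const p).aestronglyMeasurable
        (Eventually.of_forall fun ω => ?_)
      have h1 := add_nonneg zero_le_one (hNe0 S ω)
      rw [Real.norm_of_nonneg (Real.rpow_nonneg h1 p)]
      exact Real.rpow_le_rpow h1 (hNc S subset_rfl ω) hp0.le
    · have h1 : 1 + ∑ j ∈ S.erase i, J (X j ω) ≤ 1 + ∑ j ∈ S, J (X j ω) := by
        rw [← Finset.add_sum_erase S (fun j => J (X j ω)) hi]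
        linarith [hJ0 (X i ω)]
      calc V i ω ≤ (1 + ∑ j ∈ S, J (X j ω)) ^ (p - 1) :=
            Real.rpow_le_rpow (add_nonneg zero_le_one (hNe0 _ ω)) h1 (by linarith)
        _ ≤ (1 + ∑ j ∈ S, J (X j ω)) ^ p :=
            Real.rpow_le_rpow_of_exponent_le (by linarith [hNe0 S ω]) (by linarith)
  have hcov : ∀ i ∈ S, ∫ ω, w (X i ω) * V i ω ∂μ ≤
      (2 * p / Real.log p) ^ p * ∫ ω, |X i ω| ^ p ∂μ := by
    intro i hi
    have e : ∀ ω, (1 + ∑ j : S.erase i, J (X j ω)) ^ (p - 1) = V i ω := fun ω => by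
      simp only [hV]
      rw [Finset.sum_coe_sort (S.erase i) (fun j => J (X j ω))]
    have key := hNA {i} (S.erase i) (by simpa using hi)
      (by exact_mod_cast Finset.erase_subset i S) (by simp)
      (fun v => w (v ⟨i, by simp⟩)) (fun v => (1 + ∑ j : S.erase i, J (v j)) ^ (p - 1))
      (fun v v' hvv => hwmono (hvv _))
      (fun v v' hvv => Real.rpow_le_rpow
        (add_nonneg zero_le_one (Finset.sum_nonneg fun j _ => hJ0 _))
        (by gcongr with j; exact hJmono (hvv j)) (by linarith))
      (hwint i hi) (by simpa only [e] using hVint i) (by simpa only [e] using hwV i hi)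
    simp only [e] at key
    refine key.trans ?_
    rw [mul_comm]
    have h1 : ∫ ω, w (X i ω) ∂μ ≤ ∫ ω, |X i ω| ^ p ∂μ :=
      integral_mono (hwint i hi) (hLp i hi) fun ω => hwle _
    exact mul_le_mul (hVle i hi) h1 (integral_nonneg fun ω => hw0 _) (by positivity)
  have hnn : ∀ ω, 0 ≤ (∑ i ∈ S, max (X i ω - σ) 0) ^ p := fun ω =>
    Real.rpow_nonneg (Finset.sum_nonneg fun i _ => le_max_right _ _) _
  have hM : Measurable fun ω => (∑ i ∈ S, max (X i ω - σ) 0) ^ p :=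
    (Finset.measurable_fun_sum _ fun i hi =>
      ((hmeas i hi).sub_const σ).max measurable_const).pow_const p
  have hsum := integrable_finsetSum S hwV
  have hint : Integrable (fun ω => (∑ i ∈ S, max (X i ω - σ) 0) ^ p) μ :=
    hsum.mono' hM.aestronglyMeasurable (Eventually.of_forall fun ω => by
      rw [Real.norm_of_nonneg (hnn ω)]; exact hpt ω)
  refine ⟨hint, (integral_mono hint hsum hpt).trans ?_⟩
  rw [integral_finsetSum S hwV, Finset.mul_sum]
  exact Finset.sum_le_sum hcov

/-- One-sided inequality, obtained by truncating at the level `σ` for which `σ ^ p` equals the sum of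
the two terms on the right-hand side. -/
lemma positive_part_bound [IsProbabilityMeasure μ] {X : ι → Ω → ℝ} {S : Finset ι}
    (hNA : NegAssocOn μ X S) (hmeas : ∀ i ∈ S, Measurable (X i))
    (hmean : ∀ i ∈ S, ∫ ω, X i ω ∂μ = 0) {p : ℝ} (hp : 2 ≤ p)
    (hLp : ∀ i ∈ S, Integrable (fun ω => |X i ω| ^ p) μ)
    (hL1 : ∀ i ∈ S, Integrable (X i) μ)
    (hL2 : ∀ i ∈ S, Integrable (fun ω => X i ω ^ 2) μ)
    (hpos : 0 < ∑ i ∈ S, ∫ ω, |X i ω| ^ p ∂μ) :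
    Integrable (fun ω => max (∑ i ∈ S, X i ω) 0 ^ p) μ ∧
    ∫ ω, max (∑ i ∈ S, X i ω) 0 ^ p ∂μ ≤ (4 * p / Real.log p) ^ p *
      ((∑ i ∈ S, ∫ ω, X i ω ^ 2 ∂μ) ^ (p / 2) + ∑ i ∈ S, ∫ ω, |X i ω| ^ p ∂μ) := by
  have hL : 0 < Real.log p := Real.log_pos (by linarith)
  have hp0 : 0 < p := by linarith
  set A := ∑ i ∈ S, ∫ ω, |X i ω| ^ p ∂μ with hA
  set B := ∑ i ∈ S, ∫ ω, X i ω ^ 2 ∂μ with hB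
  have hB0 : 0 ≤ B := Finset.sum_nonneg fun i _ => integral_nonneg fun ω => sq_nonneg _
  have hBp : 0 ≤ B ^ (p / 2) := Real.rpow_nonneg hB0 _
  have hD : 0 < B ^ (p / 2) + A := by linarith
  set σ : ℝ := (B ^ (p / 2) + A) ^ (1 / p) with hσd
  have hσ : 0 < σ := by positivity
  have hσp : σ ^ p = B ^ (p / 2) + A := by
    rw [hσd, ← Real.rpow_mul hD.le, one_div_mul_cancel hp0.ne', Real.rpow_one]
  have hBσ : B ≤ σ ^ 2 := by
    have h1 : B ^ (p / 2) ≤ (σ ^ 2) ^ (p / 2) := by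
      rw [← Real.rpow_natCast σ 2, ← Real.rpow_mul hσ.le]
      have : ((2 : ℕ) : ℝ) * (p / 2) = p := by push_cast; ring
      rw [this, hσp]; linarith
    exact (Real.rpow_le_rpow_iff hB0 (by positivity) (by positivity)).1 h1
  obtain ⟨I1, b1⟩ := trunc_part hNA hmeas hmean hL1 hL2 hp hσ hBσ
  obtain ⟨I2, b2⟩ := excess_part hNA hmeas hp hσ hLp (by rw [hσp, ← hA]; linarith)
  have hpt : ∀ ω, max (∑ i ∈ S, X i ω) 0 ^ p ≤ 2 ^ (p - 1) *
      (max (∑ i ∈ S, min (X i ω) σ) 0 ^ p + (∑ i ∈ S, max (X i ω - σ) 0) ^ p) := by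
    intro ω
    have hR : 0 ≤ ∑ i ∈ S, max (X i ω - σ) 0 := Finset.sum_nonneg fun i _ => le_max_right _ _
    have hsplit : ∑ i ∈ S, X i ω = ∑ i ∈ S, min (X i ω) σ + ∑ i ∈ S, max (X i ω - σ) 0 := by
      rw [← Finset.sum_add_distrib]
      refine Finset.sum_congr rfl fun i _ => ?_
      rcases le_total (X i ω) σ with h | h
      · rw [min_eq_left h, max_eq_right (by linarith)]; ring
      · rw [min_eq_right h, max_eq_left (by linarith)]; ring
    have h1 : max (∑ i ∈ S, X i ω) 0 ≤
        max (∑ i ∈ S, min (X i ω) σ) 0 + ∑ i ∈ S, max (X i ω - σ) 0 := by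
      rw [hsplit]
      exact max_le (by gcongr; exact le_max_left _ _) (by positivity)
    refine (Real.rpow_le_rpow (le_max_right _ _) h1 hp0.le).trans ?_
    have := NNReal.rpow_add_le_mul_rpow_add_rpow
      ⟨max (∑ i ∈ S, min (X i ω) σ) 0, le_max_right _ _⟩
      ⟨∑ i ∈ S, max (X i ω - σ) 0, hR⟩ (p := p) (by linarith)
    exact_mod_cast this
  have IR := (I1.add I2).const_mul (2 ^ (p - 1))
  have hM : Measurable fun ω => max (∑ i ∈ S, X i ω) 0 ^ p :=
    ((Finset.measurable_fun_sum _ hmeas).max measurable_const).pow_const p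
  have hint : Integrable (fun ω => max (∑ i ∈ S, X i ω) 0 ^ p) μ :=
    IR.mono' hM.aestronglyMeasurable (Eventually.of_forall fun ω => by
      rw [Real.norm_of_nonneg (by positivity)]; exact hpt ω)
  refine ⟨hint, (integral_mono hint IR hpt).trans ?_⟩
  rw [integral_const_mul]
  simp only [Pi.add_apply]
  rw [integral_add I1 I2]
  have h2 : (2 : ℝ) ^ (p - 1) * 2 = 2 ^ p := by
    rw [← Real.rpow_add_one (by norm_num)]; congr 1; ring
  rw [← hA] at b2
  calc 2 ^ (p - 1) * (_ + _)
      ≤ 2 ^ (p - 1) * ((2 * p / Real.log p) ^ p * σ ^ p + (2 * p / Real.log p) ^ p * σ ^ p) := by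
        gcongr
        refine b2.trans ?_
        gcongr
        linarith
    _ = 2 ^ p * (2 * p / Real.log p) ^ p * σ ^ p := by rw [← h2]; ring
    _ = _ := by
        rw [← Real.mul_rpow (by norm_num) (by positivity), hσp]
        congr 2
        ring

end Field

/-- **Rosenthal-type moment inequality for sums of a negatively associated field**
(Lemma 2.1). For `p ≥ 2`,
`E|Σ_{i ≤ n} Y_i|^p ≤ 2 (15 p / ln p)^p { (Σ_{i ≤ n} E Y_i²)^{p/2} + Σ_{i ≤ n} E|Y_i|^p }`. -/
theorem na_field_moment_inequality
    {Ω : Type} [MeasurableSpace Ω] (μ : Measure Ω) [IsProbabilityMeasure μ]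
    (d : ℕ) (p : ℝ) (hp : 2 ≤ p)
    (n : Fin d → ℕ)
    (Y : (Fin d → ℕ) → Ω → ℝ)
    (hmeas : ∀ k ∈ Finset.Icc (1 : Fin d → ℕ) n, Measurable (Y k))
    (hNA : NegAssocOn μ Y (Set.Icc 1 n))
    (hmean : ∀ k ∈ Finset.Icc (1 : Fin d → ℕ) n, ∫ ω, Y k ω ∂μ = 0)
    (hLp : ∀ k ∈ Finset.Icc (1 : Fin d → ℕ) n, Integrable (fun ω => |Y k ω| ^ p) μ) :
    ∫ ω, |∑ i ∈ Finset.Icc (1 : Fin d → ℕ) n, Y i ω| ^ p ∂μ ≤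
      2 * (15 * p / Real.log p) ^ p *
        ((∑ i ∈ Finset.Icc (1 : Fin d → ℕ) n, ∫ ω, (Y i ω) ^ 2 ∂μ) ^ (p / 2)
          + ∑ i ∈ Finset.Icc (1 : Fin d → ℕ) n, ∫ ω, |Y i ω| ^ p ∂μ) := by
  have hL : 0 < Real.log p := Real.log_pos (by linarith)
  have hp0 : 0 < p := by linarith
  set S := Finset.Icc (1 : Fin d → ℕ) n with hS
  have hNA' : NegAssocOn μ Y (S : Set (Fin d → ℕ)) := by rwa [hS, Finset.coe_Icc]
  have hmem : ∀ k ∈ S, MemLp (Y k) (ENNReal.ofReal p) μ := fun k hk => by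
    rw [← integrable_norm_rpow_iff (hmeas k hk).aestronglyMeasurable (by simpa using hp0) (by simp),
      ENNReal.toReal_ofReal hp0.le]
    exact hLp k hk
  have hL2 : ∀ k ∈ S, Integrable (fun ω => Y k ω ^ 2) μ := fun k hk =>
    ((hmem k hk).mono_exponent (ENNReal.le_ofReal_iff_toReal_le (by simp) hp0.le |>.2
      (by simpa using hp))).integrable_sq
  have hL1 : ∀ k ∈ S, Integrable (Y k) μ := fun k hk =>
    (hmem k hk).integrable (ENNReal.one_le_ofReal.2 (by linarith))
  have hA0 : 0 ≤ ∑ i ∈ S, ∫ ω, |Y i ω| ^ p ∂μ :=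
    Finset.sum_nonneg fun i _ => integral_nonneg fun ω => by positivity
  -- If `A = 0`, every `Y k` vanishes almost surely and no positive truncation level is available.
  rcases hA0.eq_or_lt' with hA | hA
  · have hz : ∀ k ∈ S, Y k =ᵐ[μ] 0 := by
      intro k hk
      have h1 := (Finset.sum_eq_zero_iff_of_nonneg fun i _ =>
        integral_nonneg fun ω => by positivity).1 hA k hk
      rw [integral_eq_zero_iff_of_nonneg (fun ω => by positivity) (hLp k hk)] at h1
      filter_upwards [h1] with ω hω
      simpa [Real.rpow_eq_zero (abs_nonneg _) hp0.ne'] using hω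
    have hz' : ∀ᵐ ω ∂μ, ∀ k ∈ S, Y k ω = 0 := (Finset.eventually_all S).2 hz
    have : ∫ ω, |∑ i ∈ S, Y i ω| ^ p ∂μ = 0 := by
      refine integral_eq_zero_of_ae ?_
      filter_upwards [hz'] with ω hω
      simp [Finset.sum_eq_zero hω, Real.zero_rpow hp0.ne']
    rw [this]
    have : 0 ≤ ∑ i ∈ S, ∫ ω, Y i ω ^ 2 ∂μ :=
      Finset.sum_nonneg fun i _ => integral_nonneg fun ω => sq_nonneg _
    positivity
  obtain ⟨I1, b1⟩ := positive_part_bound hNA' hmeas hmean hp hLp hL1 hL2 hA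
  obtain ⟨I2, b2⟩ := positive_part_bound (X := fun i ω => -Y i ω) hNA'.neg
    (fun k hk => (hmeas k hk).neg) (fun k hk => by rw [integral_neg, hmean k hk, neg_zero]) hp
    (by simpa only [abs_neg] using hLp) (fun k hk => (hL1 k hk).neg)
    (by simpa only [neg_sq] using hL2) (by simpa only [abs_neg] using hA)
  simp only [abs_neg, neg_sq] at b2
  have hsplit : ∀ ω, |∑ i ∈ S, Y i ω| ^ p =
      max (∑ i ∈ S, Y i ω) 0 ^ p + max (∑ i ∈ S, -Y i ω) 0 ^ p := by
    intro ω
    rw [Finset.sum_neg_distrib]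
    rcases le_total (∑ i ∈ S, Y i ω) 0 with h | h
    · rw [abs_of_nonpos h, max_eq_right h, max_eq_left (by linarith), Real.zero_rpow hp0.ne',
        zero_add]
    · rw [abs_of_nonneg h, max_eq_left h, max_eq_right (by linarith), Real.zero_rpow hp0.ne',
        add_zero]
  have hB0 : 0 ≤ ∑ i ∈ S, ∫ ω, Y i ω ^ 2 ∂μ :=
    Finset.sum_nonneg fun i _ => integral_nonneg fun ω => sq_nonneg _
  simp only [hsplit]
  rw [integral_add I1 I2]
  have hconst : (4 * p / Real.log p) ^ p ≤ (15 * p / Real.log p) ^ p := by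
    gcongr; norm_num
  have hD : 0 ≤ (∑ i ∈ S, ∫ ω, Y i ω ^ 2 ∂μ) ^ (p / 2) + ∑ i ∈ S, ∫ ω, |Y i ω| ^ p ∂μ := by
    positivity
  nlinarith [mul_le_mul_of_nonneg_right hconst hD]
end
end

section
/- Let {Y_k : k ≤ n}, with n ∈ ℕ^d, be a negatively associated field of random variables with E[Y_k] = 0 and E[|Y_k|³] < ∞ for every k ≤ n. Let T_n = Σ_{i ≤ n} Y_i and B_n² = Σ_{k ≤ n} E[Y_k²]. Then for all x > 0, P(T_n ≥ x B_n) ≥ (1 − Φ(x + 1)) − 6 B_n^{−2} Σ_{1 ≤ i ≠ j ≤ n} |E[Y_i Y_j]| − 12 B_n^{−3} Σ_{k ≤ n} E[|Y_k|³], where Φ is the standard normal distribution function. -/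
/-!
The proof compares `E h (T)` with `E h (B N)`, `N` standard normal, for a smoothed indicator `h`.

Let `h (t) = smoothStep ((t / B - x) / 2)`, which rises from `0` at `t = x B` to `1` at
`t = (x + 2) B`. Then `P (T ≥ x B) ≥ E h (T)`. Since `h` is symmetric about the midpoint
`(x + 1) B` and the normal density decreases on `(0, ∞)`, also `E h (B N) ≥ 1 - Φ (x + 1)`
(`one_sub_cdf_le_integral_smoothStep`). The transition width `2` makes the derivatives of `h` small
enough: `|h''| ≤ 15 / (4 B²)`, and the third-order Taylor constant is `10 / (8 B³)`.

The comparison (`gaussian_comparison`) is Lindeberg's replacement of one summand at a time,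
preceded by a decoupling step that exploits negative association. For `S` a sum of some of the
variables and `Y` another one, `decoupling` bounds the effect of replacing `Y` by an independent
copy by `sup |h''| |E[S Y]|`. Exchanging that copy for a Gaussian of the same variance costs the two
Taylor remainders, bounded through `E|G|³ ≤ 2 σ³ ≤ 2 E|Y|³`. Independent variables are never
constructed: averaging over them acts on the test function, and the class `TestTriple` of test
functions is stable under such averages.
-/

open MeasureTheory Filter Finset

noncomputable section

/-- `Φ`, the standard normal cumulative distribution function. -/
def stdNormalCDF (x : ℝ) : ℝ := (ProbabilityTheory.gaussianReal 0 1 (Set.Iic x)).toReal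

/-! ### Test functions -/

/-- A bounded test function `h` together with its first two derivatives `h₁`, `h₂`, with `h₁`
`M`-Lipschitz and third-order Taylor remainder at most `K |y|³`. Differentiability is encoded by
the Taylor estimate alone, which makes the class visibly stable under averaging over
translations. -/
structure TestTriple (M K : ℝ) (h h₁ h₂ : ℝ → ℝ) : Prop where
  meas : Measurable h
  meas₁ : Measurable h₁
  meas₂ : Measurable h₂
  bdd : ∃ C, ∀ t, |h t| ≤ C ∧ |h₁ t| ≤ C ∧ |h₂ t| ≤ C
  lip : ∀ s t, |h₁ t - h₁ s| ≤ M * |t - s|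
  taylor : ∀ s y, |h (s + y) - h s - h₁ s * y - h₂ s * (y ^ 2 / 2)| ≤ K * |y| ^ 3

lemma integrable_of_abs_le {α : Type*} [MeasurableSpace α] {ν : Measure α} [IsFiniteMeasure ν]
    {f : α → ℝ} (hf : Measurable f) {C : ℝ} (hC : ∀ t, |f t| ≤ C) : Integrable f ν :=
  Integrable.of_bound hf.aestronglyMeasurable C (Eventually.of_forall hC)

lemma measurable_shift_integral {f : ℝ → ℝ} (hf : Measurable f) (ν : Measure ℝ) [SFinite ν] :
    Measurable (fun s => ∫ y, f (s + y) ∂ν) := by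
  have h : StronglyMeasurable (fun p : ℝ × ℝ => f (p.1 + p.2)) :=
    (hf.comp (measurable_fst.add measurable_snd)).stronglyMeasurable
  exact h.integral_prod_right'.measurable

lemma abs_integral_le_of_abs_le {α : Type*} [MeasurableSpace α] (ν : Measure α)
    [IsProbabilityMeasure ν] {f : α → ℝ} {C : ℝ} (hC : ∀ t, |f t| ≤ C) : |∫ y, f y ∂ν| ≤ C := by
  have := norm_integral_le_of_norm_le_const (μ := ν) (f := f) (C := C) (Eventually.of_forall hC)
  simpa using this

/-- Test triples are stable, with the same constants, under averaging over random translations. -/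
lemma TestTriple.conv {M K : ℝ} {h h₁ h₂ : ℝ → ℝ} (H : TestTriple M K h h₁ h₂)
    (ν : Measure ℝ) [IsProbabilityMeasure ν] :
    TestTriple M K (fun s => ∫ y, h (s + y) ∂ν) (fun s => ∫ y, h₁ (s + y) ∂ν)
      (fun s => ∫ y, h₂ (s + y) ∂ν) := by
  obtain ⟨C, hC⟩ := H.bdd
  have i0 : ∀ s, Integrable (fun y => h (s + y)) ν := fun s =>
    integrable_of_abs_le (H.meas.comp (measurable_const_add s)) (fun t => (hC _).1)
  have i1 : ∀ s, Integrable (fun y => h₁ (s + y)) ν := fun s =>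
    integrable_of_abs_le (H.meas₁.comp (measurable_const_add s)) (fun t => (hC _).2.1)
  have i2 : ∀ s, Integrable (fun y => h₂ (s + y)) ν := fun s =>
    integrable_of_abs_le (H.meas₂.comp (measurable_const_add s)) (fun t => (hC _).2.2)
  refine ⟨measurable_shift_integral H.meas ν, measurable_shift_integral H.meas₁ ν,
    measurable_shift_integral H.meas₂ ν, ⟨C, fun t => ⟨?_, ?_, ?_⟩⟩, fun s t => ?_, fun s y => ?_⟩
  · exact abs_integral_le_of_abs_le ν fun y => (hC _).1
  · exact abs_integral_le_of_abs_le ν fun y => (hC _).2.1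
  · exact abs_integral_le_of_abs_le ν fun y => (hC _).2.2
  · rw [← integral_sub (i1 t) (i1 s)]
    refine abs_integral_le_of_abs_le ν fun y => ?_
    simpa using H.lip (s + y) (t + y)
  · have j0 : Integrable (fun z => h (s + y + z) - h (s + z)) ν := (i0 _).sub (i0 s)
    have j1 : Integrable (fun z => h (s + y + z) - h (s + z) - h₁ (s + z) * y) ν :=
      j0.sub ((i1 s).mul_const _)
    rw [← integral_sub (i0 _) (i0 s), ← integral_mul_const, ← integral_mul_const,
      ← integral_sub j0 ((i1 s).mul_const _), ← integral_sub j1 ((i2 s).mul_const _)]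
    refine abs_integral_le_of_abs_le ν fun z => ?_
    have := H.taylor (s + z) y
    rwa [add_right_comm] at this

lemma TestTriple.hasDerivAt {M K : ℝ} {h h₁ h₂ : ℝ → ℝ} (H : TestTriple M K h h₁ h₂) (s : ℝ) :
    HasDerivAt h (h₁ s) s := by
  obtain ⟨C, hC⟩ := H.bdd
  rw [hasDerivAt_iff_isLittleO_nhds_zero]
  have hO : (fun y => h (s + y) - h s - y • h₁ s) =O[nhds 0] fun y : ℝ => y ^ 2 := by
    refine Asymptotics.IsBigO.of_bound (C + |K|) ?_
    filter_upwards [Metric.ball_mem_nhds (0 : ℝ) one_pos] with y hy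
    have hy1 : |y| < 1 := by simpa using hy
    have h1 := H.taylor s y
    have h2 : |h₂ s * (y ^ 2 / 2)| ≤ C * y ^ 2 := by
      rw [abs_mul, abs_of_nonneg (by positivity : 0 ≤ y ^ 2 / 2)]
      have := (hC s).2.2
      nlinarith [sq_nonneg y, abs_nonneg (h₂ s)]
    have h3 : K * |y| ^ 3 ≤ |K| * y ^ 2 := by
      have : |y| ^ 3 ≤ y ^ 2 := by rw [← sq_abs]; nlinarith [abs_nonneg y, sq_nonneg |y|]
      calc K * |y| ^ 3 ≤ |K| * |y| ^ 3 := by gcongr; exact le_abs_self K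
        _ ≤ _ := by gcongr
    rw [Real.norm_eq_abs, Real.norm_eq_abs, abs_of_nonneg (sq_nonneg y), smul_eq_mul, mul_comm y]
    rw [abs_le] at *
    constructor <;> linarith
  refine hO.trans_isLittleO ?_
  simpa using (Asymptotics.isLittleO_pow_pow (𝕜 := ℝ) (m := 1) (n := 2) (by norm_num))

lemma TestTriple.continuous₁ {M K : ℝ} {h h₁ h₂ : ℝ → ℝ} (H : TestTriple M K h h₁ h₂) :
    Continuous h₁ := by
  refine (LipschitzWith.of_dist_le' (K := M) fun x y => ?_).continuous
  simpa [Real.dist_eq] using H.lip y x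

/-- The kernel `1{u ≤ y} - 1{u ≤ 0}`, which represents `∫ u in 0..y, f u` as
`∫ u, f u * stepKernel u y` for either sign of `y`. -/
def stepKernel (u y : ℝ) : ℝ := (Set.Ici u).indicator 1 y - (Set.Iic 0).indicator 1 u

lemma stepKernel_eq (u y : ℝ) :
    stepKernel u y = (Set.Ioc 0 y).indicator 1 u - (Set.Ioc y 0).indicator 1 u := by
  simp only [stepKernel, Set.indicator, Set.mem_Ici, Set.mem_Iic, Set.mem_Ioc, Pi.one_apply]
  grind

lemma measurable_stepKernel : Measurable (fun p : ℝ × ℝ => stepKernel p.1 p.2) := by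
  have h1 : MeasurableSet {p : ℝ × ℝ | p.1 ≤ p.2} :=
    measurableSet_le measurable_fst measurable_snd
  have h2 : MeasurableSet {p : ℝ × ℝ | p.1 ≤ 0} :=
    measurableSet_le measurable_fst measurable_const
  have e : (fun p : ℝ × ℝ => stepKernel p.1 p.2) = fun p =>
      {p : ℝ × ℝ | p.1 ≤ p.2}.indicator 1 p - {p : ℝ × ℝ | p.1 ≤ 0}.indicator 1 p := by
    ext p
    simp [stepKernel, Set.indicator]
  rw [e]
  exact (measurable_one.indicator h1).sub (measurable_one.indicator h2)

lemma abs_stepKernel (u y : ℝ) :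
    |stepKernel u y| = (Set.Ioc 0 y).indicator 1 u + (Set.Ioc y 0).indicator 1 u := by
  simp only [stepKernel, Set.indicator, Set.mem_Ici, Set.mem_Iic, Set.mem_Ioc, Pi.one_apply]
  grind

lemma integrable_indicator_Ioc (a b : ℝ) : Integrable ((Set.Ioc a b).indicator (1 : ℝ → ℝ)) := by
  rw [integrable_indicator_iff measurableSet_Ioc]
  exact integrableOn_const (by simp)

lemma integral_indicator_Ioc (a b : ℝ) :
    ∫ u, (Set.Ioc a b).indicator (1 : ℝ → ℝ) u = max (b - a) 0 := by
  rw [integral_indicator_one measurableSet_Ioc]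
  simp [Measure.real, ENNReal.toReal_ofReal']

lemma integrable_stepKernel (y : ℝ) : Integrable (fun u => stepKernel u y) := by
  simp_rw [stepKernel_eq]
  exact (integrable_indicator_Ioc _ _).sub (integrable_indicator_Ioc _ _)

lemma integral_abs_stepKernel (y : ℝ) : ∫ u, |stepKernel u y| = |y| := by
  simp_rw [abs_stepKernel]
  rw [integral_add (integrable_indicator_Ioc _ _) (integrable_indicator_Ioc _ _),
    integral_indicator_Ioc, integral_indicator_Ioc]
  grind

lemma integral_stepKernel (y : ℝ) : ∫ u, stepKernel u y = y := by
  simp_rw [stepKernel_eq]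
  rw [integral_sub (integrable_indicator_Ioc _ _) (integrable_indicator_Ioc _ _),
    integral_indicator_Ioc, integral_indicator_Ioc]
  grind

lemma TestTriple.integral_mul_stepKernel {M K : ℝ} {h h₁ h₂ : ℝ → ℝ}
    (H : TestTriple M K h h₁ h₂) (s y : ℝ) :
    ∫ u, h₁ (s + u) * stepKernel u y = h (s + y) - h s := by
  have hc : Continuous fun u => h₁ (s + u) := H.continuous₁.comp (continuous_const.add continuous_id)
  have e : ∀ u, h₁ (s + u) * stepKernel u y =
      (Set.Ioc 0 y).indicator (fun u => h₁ (s + u)) u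
        - (Set.Ioc y 0).indicator (fun u => h₁ (s + u)) u := by
    intro u
    rw [stepKernel_eq]
    simp only [Set.indicator, Pi.one_apply]
    split_ifs <;> ring
  have hi : ∀ a b, Integrable ((Set.Ioc a b).indicator (fun u => h₁ (s + u))) := fun a b => by
    rw [integrable_indicator_iff measurableSet_Ioc]
    exact (hc.integrableOn_Icc).mono_set Set.Ioc_subset_Icc_self
  simp_rw [e]
  rw [integral_sub (hi _ _) (hi _ _), integral_indicator measurableSet_Ioc,
    integral_indicator measurableSet_Ioc, ← intervalIntegral]
  have := intervalIntegral.integral_eq_sub_of_hasDerivAt (a := 0) (b := y)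
    (f := fun u => h (s + u)) (f' := fun u => h₁ (s + u))
    (fun u _ => (H.hasDerivAt (s + u)).comp_const_add s u) (hc.intervalIntegrable _ _)
  simpa using this

/-! ### Decoupling -/

lemma integrable_prod_mul_stepKernel {Ω : Type} [MeasurableSpace Ω] {μ : Measure Ω} [SFinite μ]
    {w Y : Ω → ℝ} (hw : Measurable w) (hY : Measurable Y)
    (hwY : Integrable (fun ω => w ω * Y ω) μ) :
    Integrable (fun p : Ω × ℝ => w p.1 * stepKernel p.2 (Y p.1)) (μ.prod volume) := by
  have hm : Measurable (fun p : Ω × ℝ => w p.1 * stepKernel p.2 (Y p.1)) :=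
    (hw.comp measurable_fst).mul
      (measurable_stepKernel.comp (measurable_snd.prodMk (hY.comp measurable_fst)))
  rw [integrable_prod_iff hm.aestronglyMeasurable]
  refine ⟨Eventually.of_forall fun ω => (integrable_stepKernel (Y ω)).const_mul (w ω), ?_⟩
  refine hwY.norm.congr (Eventually.of_forall fun ω => ?_)
  simp only [Real.norm_eq_abs, abs_mul]
  rw [integral_const_mul, integral_abs_stepKernel]

lemma integrable_prod_bdd_mul_stepKernel {Ω : Type} [MeasurableSpace Ω] {μ : Measure Ω}
    [IsProbabilityMeasure μ] {Y : Ω → ℝ} (hY : Measurable Y) (hYi : Integrable Y μ)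
    {W : Ω × ℝ → ℝ} (hW : Measurable W) {C : ℝ} (hC : ∀ p, |W p| ≤ C) :
    Integrable (fun p : Ω × ℝ => W p * stepKernel p.2 (Y p.1)) (μ.prod volume) := by
  have h1 := integrable_prod_mul_stepKernel (w := fun _ => (1 : ℝ)) (measurable_const) hY
    (μ := μ) (by simpa using hYi)
  simp only [one_mul] at h1
  exact h1.bdd_mul hW.aestronglyMeasurable (Eventually.of_forall hC)

/-- Decoupling of a negatively dependent pair `(S, Y)`: replacing `Y` by an independent copy
changes `E h (S + Y)` by at most `M |E[S Y]|`. The change equals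
`∫ Cov (h₁ (S + u), 1{u ≤ Y}) du`. As `s ↦ M s ± h₁ (s + u)` is non-decreasing, each covariance is
at most `- M Cov (S, 1{u ≤ Y})` in absolute value, and these bounds integrate to `- M E[S Y]`. -/
lemma decoupling {Ω : Type} [MeasurableSpace Ω] {μ : Measure Ω} [IsProbabilityMeasure μ]
    {M K : ℝ} {h h₁ h₂ : ℝ → ℝ} (H : TestTriple M K h h₁ h₂)
    {S Y : Ω → ℝ} (hS : Measurable S) (hY : Measurable Y)
    (hSi : Integrable S μ) (hYi : Integrable Y μ) (hSY : Integrable (fun ω => S ω * Y ω) μ)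
    (hS0 : ∫ ω, S ω ∂μ = 0)
    (hneg : ∀ (u : ℝ) (φ : ℝ → ℝ), Monotone φ → Integrable (fun ω => φ (S ω)) μ →
      ∫ ω, φ (S ω) * (Set.Ici u).indicator 1 (Y ω) ∂μ ≤
        (∫ ω, φ (S ω) ∂μ) * ∫ ω, (Set.Ici u).indicator 1 (Y ω) ∂μ) :
    |∫ ω, h (S ω + Y ω) ∂μ - ∫ ω, (∫ y, h (S ω + y) ∂(μ.map Y)) ∂μ| ≤
      M * |∫ ω, S ω * Y ω ∂μ| := by
  obtain ⟨C, hC⟩ := H.bdd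
  have : IsProbabilityMeasure (μ.map Y) := Measure.isProbabilityMeasure_map hY.aemeasurable
  have : IsProbabilityMeasure (μ.map S) := Measure.isProbabilityMeasure_map hS.aemeasurable
  have hM : 0 ≤ M := by simpa using (abs_nonneg _).trans (H.lip 0 1)
  have mh1 : ∀ u, Measurable fun ω => h₁ (S ω + u) := fun u =>
    H.meas₁.comp (hS.add_const u)
  have ih1 : ∀ u, Integrable (fun ω => h₁ (S ω + u)) μ := fun u =>
    integrable_of_abs_le (mh1 u) fun ω => (hC _).2.1
  have mI : ∀ u, Measurable fun ω => (Set.Ici u).indicator (1 : ℝ → ℝ) (Y ω) := fun u =>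
    (measurable_one.indicator measurableSet_Ici).comp hY
  have bI : ∀ u ω, |(Set.Ici u).indicator (1 : ℝ → ℝ) (Y ω)| ≤ 1 := fun u ω => by
    simp only [Set.indicator, Pi.one_apply]; split_ifs <;> simp
  have iI : ∀ u, Integrable (fun ω => (Set.Ici u).indicator (1 : ℝ → ℝ) (Y ω)) μ := fun u =>
    integrable_of_abs_le (mI u) (bI u)
  have ih1I : ∀ u, Integrable (fun ω => h₁ (S ω + u) * (Set.Ici u).indicator 1 (Y ω)) μ :=
    fun u => (ih1 u).mul_bdd (c := 1) (mI u).aestronglyMeasurable (Eventually.of_forall (bI u))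
  have iSI : ∀ u, Integrable (fun ω => S ω * (Set.Ici u).indicator 1 (Y ω)) μ :=
    fun u => hSi.mul_bdd (c := 1) (mI u).aestronglyMeasurable (Eventually.of_forall (bI u))
  -- `D u` is the covariance of `h₁ (S + u)` and `1{u ≤ Y}`; the constant part of `stepKernel`
  -- cancels, and makes each of the two terms integrable in `u`.
  set D : ℝ → ℝ := fun u => ∫ ω, h₁ (S ω + u) * stepKernel u (Y ω) ∂μ -
    ∫ ω, (∫ s, h₁ (u + s) ∂(μ.map S)) * stepKernel u (Y ω) ∂μ with hD
  have hDbound : ∀ u, |D u| ≤ -M * ∫ ω, S ω * stepKernel u (Y ω) ∂μ := by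
    intro u
    have hmono : ∀ ε : ℝ, |ε| = 1 → Monotone fun s => M * s + ε * h₁ (s + u) := by
      intro ε hε s t hst
      have h1 := H.lip (s + u) (t + u)
      rw [add_sub_add_right_eq_sub, abs_of_nonneg (sub_nonneg.2 hst)] at h1
      have h2 : |ε * (h₁ (t + u) - h₁ (s + u))| ≤ M * (t - s) := by rwa [abs_mul, hε, one_mul]
      have h3 := (abs_le.1 h2).1
      simp only
      linarith
    have key : ∀ ε : ℝ, |ε| = 1 →
        M * ∫ ω, S ω * (Set.Ici u).indicator 1 (Y ω) ∂μ
          + ε * ∫ ω, h₁ (S ω + u) * (Set.Ici u).indicator 1 (Y ω) ∂μ ≤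
        ε * (∫ ω, h₁ (S ω + u) ∂μ) * ∫ ω, (Set.Ici u).indicator 1 (Y ω) ∂μ := by
      intro ε hε
      have := hneg u _ (hmono ε hε) ((hSi.const_mul M).add ((ih1 u).const_mul ε))
      simp only [add_mul, mul_assoc] at this
      rw [integral_add ((iSI u).const_mul M) ((ih1I u).const_mul ε),
        integral_add (hSi.const_mul M) ((ih1 u).const_mul ε), integral_const_mul,
        integral_const_mul, integral_const_mul, integral_const_mul, hS0, mul_zero,
        zero_add] at this
      linarith
    have k1 := key 1 (by simp)
    have k2 := key (-1) (by simp)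
    have eS : ∫ ω, S ω * stepKernel u (Y ω) ∂μ =
        ∫ ω, S ω * (Set.Ici u).indicator 1 (Y ω) ∂μ := by
      simp only [stepKernel, mul_sub]
      rw [integral_sub (iSI u) (hSi.mul_const _), integral_mul_const, hS0, zero_mul, sub_zero]
    have eD : D u = ∫ ω, h₁ (S ω + u) * (Set.Ici u).indicator 1 (Y ω) ∂μ -
        (∫ ω, h₁ (S ω + u) ∂μ) * ∫ ω, (Set.Ici u).indicator 1 (Y ω) ∂μ := by
      have e1 : ∫ s, h₁ (u + s) ∂(μ.map S) = ∫ ω, h₁ (S ω + u) ∂μ := by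
        refine (integral_map hS.aemeasurable
          (H.meas₁.comp (measurable_const_add u)).aestronglyMeasurable).trans ?_
        simp only [Function.comp_apply, add_comm u]
      simp only [hD, e1]
      rw [integral_const_mul]
      simp only [stepKernel, mul_sub]
      rw [integral_sub (ih1I u) ((ih1 u).mul_const _), integral_sub (iI u) (integrable_const _),
        integral_mul_const]
      simp
      ring
    rw [eS, eD, abs_le]
    constructor <;> linarith
  -- Integrability on the product space, for the three interchanges of `∫ du` with `E`.
  have f1 : Integrable (fun p : Ω × ℝ => h₁ (S p.1 + p.2) * stepKernel p.2 (Y p.1))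
      (μ.prod volume) := integrable_prod_bdd_mul_stepKernel hY hYi
    (W := fun p => h₁ (S p.1 + p.2))
    (H.meas₁.comp ((hS.comp measurable_fst).add measurable_snd)) (fun p => (hC _).2.1)
  have f2 : Integrable (fun p : Ω × ℝ => (∫ s, h₁ (p.2 + s) ∂(μ.map S)) * stepKernel p.2 (Y p.1))
      (μ.prod volume) := integrable_prod_bdd_mul_stepKernel hY hYi
    (W := fun p => ∫ s, h₁ (p.2 + s) ∂(μ.map S))
    ((measurable_shift_integral H.meas₁ _).comp measurable_snd)
    (fun p => abs_integral_le_of_abs_le _ fun s => (hC _).2.1)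
  have f3 := integrable_prod_mul_stepKernel hS hY hSY
  have e1 : ∫ u, ∫ ω, h₁ (S ω + u) * stepKernel u (Y ω) ∂μ =
      ∫ ω, h (S ω + Y ω) ∂μ - ∫ ω, h (S ω) ∂μ := by
    rw [← integral_integral_swap (f := fun ω u => h₁ (S ω + u) * stepKernel u (Y ω)) f1]
    simp_rw [H.integral_mul_stepKernel]
    rw [integral_sub]
    · exact integrable_of_abs_le (H.meas.comp (hS.add hY)) fun ω => (hC _).1
    · exact integrable_of_abs_le (H.meas.comp hS) fun ω => (hC _).1
  have e2 : ∫ u, ∫ ω, (∫ s, h₁ (u + s) ∂(μ.map S)) * stepKernel u (Y ω) ∂μ =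
      ∫ ω, (∫ y, h (S ω + y) ∂(μ.map Y)) ∂μ - ∫ ω, h (S ω) ∂μ := by
    rw [← integral_integral_swap
      (f := fun ω u => (∫ s, h₁ (u + s) ∂(μ.map S)) * stepKernel u (Y ω)) f2]
    have := (H.conv (μ.map S)).integral_mul_stepKernel 0
    simp only [zero_add] at this
    simp_rw [this]
    rw [integral_sub _ (integrable_const _)]
    · rw [integral_map hS.aemeasurable H.meas.aestronglyMeasurable]
      have m2 : Measurable fun p : ℝ × ℝ => h (p.1 + p.2) :=
        H.meas.comp (measurable_fst.add measurable_snd)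
      have e3 : ∫ ω, (∫ y, h (S ω + y) ∂(μ.map Y)) ∂μ =
          ∫ s, ∫ y, h (s + y) ∂(μ.map Y) ∂(μ.map S) := by
        rw [integral_map hS.aemeasurable
          (measurable_shift_integral H.meas _).aestronglyMeasurable]
      have e4 : ∫ ω, (∫ s, h (Y ω + s) ∂(μ.map S)) ∂μ =
          ∫ y, ∫ s, h (y + s) ∂(μ.map S) ∂(μ.map Y) := by
        rw [integral_map hY.aemeasurable
          (measurable_shift_integral H.meas _).aestronglyMeasurable]
      rw [e3, e4, integral_integral_swap]
      · simp [add_comm]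
      · exact integrable_of_abs_le m2 fun p => (hC _).1
    · exact integrable_of_abs_le ((measurable_shift_integral H.meas _).comp hY)
        fun ω => abs_integral_le_of_abs_le _ fun s => (hC _).1
  have e3 : ∫ u, ∫ ω, S ω * stepKernel u (Y ω) ∂μ = ∫ ω, S ω * Y ω ∂μ := by
    rw [← integral_integral_swap (f := fun ω u => S ω * stepKernel u (Y ω)) f3]
    simp_rw [integral_const_mul, integral_stepKernel]
  have eD : ∫ u, D u = ∫ ω, h (S ω + Y ω) ∂μ - ∫ ω, (∫ y, h (S ω + y) ∂(μ.map Y)) ∂μ := by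
    rw [hD, integral_sub f1.integral_prod_right f2.integral_prod_right, e1, e2]
    ring
  rw [← eD]
  calc |∫ u, D u| ≤ ∫ u, -M * ∫ ω, S ω * stepKernel u (Y ω) ∂μ :=
        norm_integral_le_of_norm_le (f := D) (f3.integral_prod_right.const_mul (-M))
          (Eventually.of_forall hDbound)
    _ = M * (-∫ ω, S ω * Y ω ∂μ) := by rw [integral_const_mul, e3]; ring
    _ ≤ _ := mul_le_mul_of_nonneg_left (neg_le_abs _) hM

/-! ### Third moments -/

lemma integrable_pow_of_cube {α : Type*} [MeasurableSpace α] {ν : Measure α} [IsFiniteMeasure ν]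
    {f : α → ℝ} (hf : AEStronglyMeasurable f ν) (h3 : Integrable (fun a => |f a| ^ 3) ν)
    {p : ℕ} (hp : p ≤ 3) :
    Integrable (fun a => f a ^ p) ν := by
  refine Integrable.mono' ((integrable_const 1).add h3) (hf.pow p) (Eventually.of_forall fun a => ?_)
  simp only [norm_pow, Real.norm_eq_abs, Pi.add_apply]
  rcases le_total |f a| 1 with h | h
  · have : |f a| ^ p ≤ 1 := pow_le_one₀ (abs_nonneg _) h
    have : 0 ≤ |f a| ^ 3 := by positivity
    linarith
  · have : |f a| ^ p ≤ |f a| ^ 3 := pow_le_pow_right₀ h hp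
    linarith

/-- Averaging the Taylor expansion over a centred law leaves the variance term. -/
lemma TestTriple.abs_shift_integral_sub_le {M K : ℝ} {h h₁ h₂ : ℝ → ℝ}
    (H : TestTriple M K h h₁ h₂) (ν : Measure ℝ) [IsProbabilityMeasure ν]
    (h3 : Integrable (fun y => |y| ^ 3) ν) (hmean : ∫ y, y ∂ν = 0) (s : ℝ) :
    |∫ y, h (s + y) ∂ν - h s - h₂ s * ((∫ y, y ^ 2 ∂ν) / 2)| ≤ K * ∫ y, |y| ^ 3 ∂ν := by
  obtain ⟨C, hC⟩ := H.bdd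
  have i0 : Integrable (fun y => h (s + y)) ν :=
    integrable_of_abs_le (H.meas.comp (measurable_const_add s)) (fun t => (hC _).1)
  have i1 : Integrable (fun y : ℝ => y) ν := by
    simpa using integrable_pow_of_cube (f := fun y : ℝ => y) (p := 1)
      measurable_id.aestronglyMeasurable h3 (by norm_num)
  have i2 : Integrable (fun y : ℝ => y ^ 2) ν := integrable_pow_of_cube (f := fun y : ℝ => y)
    (p := 2) measurable_id.aestronglyMeasurable h3 (by norm_num)
  have j0 : Integrable (fun y => h (s + y) - h s) ν := i0.sub (integrable_const _)
  have j1 : Integrable (fun y => h (s + y) - h s - h₁ s * y) ν := j0.sub (i1.const_mul _)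
  have e : ∫ y, (h (s + y) - h s - h₁ s * y - h₂ s * (y ^ 2 / 2)) ∂ν =
      ∫ y, h (s + y) ∂ν - h s - h₂ s * ((∫ y, y ^ 2 ∂ν) / 2) := by
    rw [integral_sub j1 ((i2.div_const _).const_mul _), integral_sub j0 (i1.const_mul _),
      integral_sub i0 (integrable_const _), integral_const_mul, integral_const_mul,
      integral_div, hmean]
    simp
  rw [← e, ← integral_const_mul, ← Real.norm_eq_abs]
  exact norm_integral_le_of_norm_le (h3.const_mul K) (Eventually.of_forall (H.taylor s))

open ProbabilityTheory in
lemma integrable_abs_cube_gaussianReal (v : NNReal) :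
    Integrable (fun y => |y| ^ 3) (gaussianReal 0 v) := by
  have := (memLp_id_gaussianReal (μ := 0) (v := v) 3).integrable_norm_pow (p := 3) (by norm_num)
  simpa using this

open ProbabilityTheory in
lemma integral_sq_gaussianReal (v : NNReal) : ∫ y, y ^ 2 ∂(gaussianReal 0 v) = v := by
  have h := variance_fun_id_gaussianReal (μ := 0) (v := v)
  rw [variance_of_integral_eq_zero (X := fun x => x) measurable_id.aemeasurable integral_id_gaussianReal] at h
  exact h

open ProbabilityTheory in
lemma integral_abs_cube_gaussianReal_one : ∫ y, |y| ^ 3 ∂(gaussianReal 0 1) ≤ 2 := by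
  rw [integral_gaussianReal_eq_integral_smul one_ne_zero]
  have e : ∀ y : ℝ, gaussianPDFReal 0 1 y • |y| ^ 3 =
      (fun t : ℝ => (√(2 * Real.pi))⁻¹ * (t ^ (3 : ℝ) * Real.exp (-(1 / 2) * t ^ (2 : ℝ)))) |y| := by
    intro y
    simp only [gaussianPDFReal, smul_eq_mul]
    norm_cast
    simp
    ring_nf
  rw [integral_congr_ae (Eventually.of_forall e)]
  rw [integral_comp_abs
    (f := fun t : ℝ => (√(2 * Real.pi))⁻¹ * (t ^ (3 : ℝ) * Real.exp (-(1 / 2) * t ^ (2 : ℝ)))),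
    integral_const_mul,
    integral_rpow_mul_exp_neg_mul_rpow (by norm_num) (by norm_num) (by norm_num)]
  have h1 : (3 + 1 : ℝ) / 2 = (1 : ℕ) + 1 := by norm_num
  rw [show (-((3 : ℝ) + 1) / 2) = ((-2 : ℤ) : ℝ) by norm_num, h1, Real.Gamma_nat_eq_factorial,
    Real.rpow_intCast]
  have h2 : 2 ≤ √(2 * Real.pi) := Real.le_sqrt_of_sq_le (by nlinarith [Real.pi_gt_three])
  have h3 : (√(2 * Real.pi))⁻¹ ≤ 2⁻¹ := inv_anti₀ (by norm_num) h2
  generalize (√(2 * Real.pi))⁻¹ = c at h3 ⊢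
  norm_num
  linarith

open ProbabilityTheory in
lemma integral_abs_cube_gaussianReal_le (v : NNReal) :
    ∫ y, |y| ^ 3 ∂(gaussianReal 0 v) ≤ 2 * √v ^ 3 := by
  have e : gaussianReal 0 v = (gaussianReal 0 1).map (√v * ·) := by
    rw [gaussianReal_map_const_mul]
    congr 1
    · simp
    · ext; simp
  rw [e, integral_map (by fun_prop) (by fun_prop)]
  simp only [abs_mul, mul_pow]
  rw [integral_const_mul, abs_of_nonneg (Real.sqrt_nonneg _)]
  nlinarith [integral_abs_cube_gaussianReal_one, pow_nonneg (Real.sqrt_nonneg v) 3]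

/-- Lyapunov's inequality between the second and third absolute moments, obtained by integrating
`(3/2) σ a² - σ³/2 ≤ a³`, that is, `(a - σ)² (a + σ/2) ≥ 0`. -/
lemma sqrt_cube_le_integral_abs_cube {α : Type*} [MeasurableSpace α] {ν : Measure α}
    [IsProbabilityMeasure ν] {f : α → ℝ} (hf : Measurable f)
    (h3 : Integrable (fun a => |f a| ^ 3) ν) :
    √(∫ a, f a ^ 2 ∂ν) ^ 3 ≤ ∫ a, |f a| ^ 3 ∂ν := by
  set σ := √(∫ a, f a ^ 2 ∂ν) with hσ
  have hσ0 : 0 ≤ σ := Real.sqrt_nonneg _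
  have hσ2 : σ ^ 2 = ∫ a, f a ^ 2 ∂ν := Real.sq_sqrt (integral_nonneg fun a => sq_nonneg _)
  have i2 : Integrable (fun a => f a ^ 2) ν :=
    integrable_pow_of_cube hf.aestronglyMeasurable h3 (by norm_num)
  have h : ∫ a, (3 / 2 * σ * f a ^ 2 - σ ^ 3 / 2) ∂ν ≤ ∫ a, |f a| ^ 3 ∂ν := by
    refine integral_mono ((i2.const_mul _).sub (integrable_const _)) h3 fun a => ?_
    simp only
    rw [← sq_abs]
    nlinarith [mul_nonneg (sq_nonneg (|f a| - σ)) (add_nonneg (abs_nonneg (f a)) (div_nonneg hσ0 zero_le_two))]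
  rw [integral_sub (i2.const_mul _) (integrable_const _), integral_const_mul, ← hσ2] at h
  simp at h
  nlinarith

/-! ### Gaussian comparison -/

open ProbabilityTheory in
/-- Gaussian comparison for negatively associated summands, by replacing them one at a time.
The summand `Y k` is first decoupled from the remaining sum `S`, at cost `M |E[S Y k]|`, and then
exchanged for a centred Gaussian of the same variance, at cost `3 K E|Y k|³`. Averaging the test
function over that Gaussian gives again a test triple, to which the induction hypothesis applies;
hence the quantification over all triples. -/
lemma gaussian_comparison {Ω : Type} [MeasurableSpace Ω] {μ : Measure Ω} [IsProbabilityMeasure μ]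
    {ι : Type} [DecidableEq ι] {Y : ι → Ω → ℝ} {I : Finset ι}
    (hmeas : ∀ k ∈ I, Measurable (Y k)) (hNA : NegAssocOn μ Y (I : Set ι))
    (hmean : ∀ k ∈ I, ∫ ω, Y k ω ∂μ = 0)
    (hL3 : ∀ k ∈ I, Integrable (fun ω => |Y k ω| ^ 3) μ) {M K : ℝ} :
    ∀ A ⊆ I, ∀ h h₁ h₂ : ℝ → ℝ, TestTriple M K h h₁ h₂ →
      |∫ ω, h (∑ i ∈ A, Y i ω) ∂μ
          - ∫ y, h y ∂(gaussianReal 0 (∑ k ∈ A, (∫ ω, Y k ω ^ 2 ∂μ).toNNReal))| ≤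
        M * (∑ i ∈ A, ∑ j ∈ A.erase i, |∫ ω, Y i ω * Y j ω ∂μ|)
          + 3 * K * ∑ k ∈ A, ∫ ω, |Y k ω| ^ 3 ∂μ := by
  intro A
  induction A using Finset.induction_on with
  | empty => intro _ h h₁ h₂ _; simp [gaussianReal_zero_var]
  | insert k A hk ih =>
    intro hA h h₁ h₂ H
    have hkI : k ∈ I := hA (mem_insert_self k A)
    have hAI : A ⊆ I := (subset_insert k A).trans hA
    obtain ⟨C, hC⟩ := H.bdd
    have hM : 0 ≤ M := by simpa using (abs_nonneg _).trans (H.lip 0 1)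
    have hK : 0 ≤ K := by simpa using (abs_nonneg _).trans (H.taylor 0 1)
    set S : Ω → ℝ := fun ω => ∑ i ∈ A, Y i ω with hSdef
    set v : NNReal := (∫ ω, Y k ω ^ 2 ∂μ).toNNReal with hv
    set V : NNReal := ∑ k ∈ A, (∫ ω, Y k ω ^ 2 ∂μ).toNNReal with hV
    have hvr : (v : ℝ) = ∫ ω, Y k ω ^ 2 ∂μ :=
      Real.coe_toNNReal _ (integral_nonneg fun ω => sq_nonneg _)
    have i1 : ∀ j ∈ I, Integrable (Y j) μ := fun j hj => by
      simpa using integrable_pow_of_cube (p := 1) (hmeas j hj).aestronglyMeasurable (hL3 j hj)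
        (by norm_num)
    have i2 : ∀ j ∈ I, MemLp (Y j) 2 μ := fun j hj =>
      (memLp_two_iff_integrable_sq (hmeas j hj).aestronglyMeasurable).2
        (integrable_pow_of_cube (p := 2) (hmeas j hj).aestronglyMeasurable (hL3 j hj)
          (by norm_num))
    have iYY : ∀ i ∈ A, Integrable (fun ω => Y i ω * Y k ω) μ := fun i hi =>
      (i2 i (hAI hi)).integrable_mul (i2 k hkI)
    have mS : Measurable S := Finset.measurable_sum _ fun i hi => hmeas i (hAI hi)
    have iS : Integrable S μ := integrable_finsetSum _ fun i hi => i1 i (hAI hi)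
    have iSY : Integrable (fun ω => S ω * Y k ω) μ := by
      simp only [hSdef, Finset.sum_mul]
      exact integrable_finsetSum _ iYY
    have hS0 : ∫ ω, S ω ∂μ = 0 := by
      rw [integral_finsetSum _ fun i hi => i1 i (hAI hi)]
      exact Finset.sum_eq_zero fun i hi => hmean i (hAI hi)
    have hcov : |∫ ω, S ω * Y k ω ∂μ| ≤ ∑ i ∈ A, |∫ ω, Y i ω * Y k ω ∂μ| := by
      simp only [hSdef, Finset.sum_mul]
      rw [integral_finsetSum _ iYY]
      exact Finset.abs_sum_le_sum_abs _ _
    have hneg : ∀ (u : ℝ) (φ : ℝ → ℝ), Monotone φ → Integrable (fun ω => φ (S ω)) μ →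
        ∫ ω, φ (S ω) * (Set.Ici u).indicator 1 (Y k ω) ∂μ ≤
          (∫ ω, φ (S ω) ∂μ) * ∫ ω, (Set.Ici u).indicator 1 (Y k ω) ∂μ := by
      intro u φ hφ hφi
      have eS : ∀ ω, ∑ i : ↥A, Y i ω = S ω := fun ω => Finset.sum_coe_sort A (fun i => Y i ω)
      have mI : Measurable fun ω => (Set.Ici u).indicator (1 : ℝ → ℝ) (Y k ω) :=
        (measurable_one.indicator measurableSet_Ici).comp (hmeas k hkI)
      have bI : ∀ ω, |(Set.Ici u).indicator (1 : ℝ → ℝ) (Y k ω)| ≤ 1 := fun ω => by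
        simp only [Set.indicator, Pi.one_apply]; split_ifs <;> simp
      have := hNA A {k} (by exact_mod_cast hAI) (by simpa using hkI) (by simpa using hk)
        (fun w => φ (∑ i, w i))
        (fun w => (Set.Ici u).indicator 1 (w ⟨k, mem_singleton_self k⟩))
        (fun a b hab => hφ (Finset.sum_le_sum fun i _ => hab i))
        (fun a b hab => by
          have := hab ⟨k, mem_singleton_self k⟩
          simp only [Set.indicator, Set.mem_Ici, Pi.one_apply]
          split_ifs <;> first | (exfalso; linarith) | norm_num)
      simp only [eS] at this
      exact this hφi (integrable_of_abs_le mI bI)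
        (hφi.mul_bdd (c := 1) mI.aestronglyMeasurable (Eventually.of_forall bI))
    have hdec := decoupling H mS (hmeas k hkI) iS (i1 k hkI) iSY hS0 hneg
    have hpν : IsProbabilityMeasure (μ.map (Y k)) :=
      Measure.isProbabilityMeasure_map (hmeas k hkI).aemeasurable
    set L := ∫ ω, |Y k ω| ^ 3 ∂μ with hL
    -- The first two moments of the law of `Y k` and of the Gaussian agree, so only the two Taylor
    -- remainders, `K L` and `2 K L`, are left.
    have hrep : ∀ s, |∫ y, h (s + y) ∂(μ.map (Y k)) - ∫ y, h (s + y) ∂(gaussianReal 0 v)|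
        ≤ 3 * K * L := by
      intro s
      have mY := (hmeas k hkI).aemeasurable (μ := μ)
      have a1 := H.abs_shift_integral_sub_le (μ.map (Y k))
        ((integrable_map_measure (by fun_prop) mY).2 (hL3 k hkI))
        (by rw [integral_map mY (by fun_prop)]; exact hmean k hkI) s
      rw [integral_map mY (f := fun y => |y| ^ 3) (by fun_prop),
        integral_map mY (f := fun y => y ^ 2) (by fun_prop), ← hvr] at a1
      have a2 := H.abs_shift_integral_sub_le (gaussianReal 0 v)
        (integrable_abs_cube_gaussianReal v) integral_id_gaussianReal s
      rw [integral_sq_gaussianReal] at a2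
      have a3 : ∫ y, |y| ^ 3 ∂(gaussianReal 0 v) ≤ 2 * L := by
        have b1 := integral_abs_cube_gaussianReal_le v
        have b2 := sqrt_cube_le_integral_abs_cube (hmeas k hkI) (hL3 k hkI)
        rw [hvr] at b1
        linarith
      have a4 := mul_le_mul_of_nonneg_left a3 hK
      rw [abs_le] at a1 a2 ⊢
      constructor <;> linarith
    have hIH := ih hAI _ _ _ (H.conv (gaussianReal 0 v))
    have hconv : ∫ s, (∫ y, h (s + y) ∂(gaussianReal 0 v)) ∂(gaussianReal 0 V) =
        ∫ y, h y ∂(gaussianReal 0 (v + V)) := by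
      have := gaussianReal_conv_gaussianReal (m₁ := 0) (m₂ := 0) (v₁ := V) (v₂ := v)
      rw [add_zero, add_comm V v] at this
      rw [← this, integral_conv]
      exact integrable_of_abs_le H.meas fun t => (hC t).1
    rw [hconv] at hIH
    have hmid : |∫ ω, (∫ y, h (S ω + y) ∂(μ.map (Y k))) ∂μ
        - ∫ ω, (∫ y, h (S ω + y) ∂(gaussianReal 0 v)) ∂μ| ≤ 3 * K * L := by
      have q : ∀ (ν : Measure ℝ) [IsProbabilityMeasure ν],
          Integrable (fun ω => ∫ y, h (S ω + y) ∂ν) μ := fun ν _ =>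
        integrable_of_abs_le ((measurable_shift_integral H.meas ν).comp mS)
          fun ω => abs_integral_le_of_abs_le _ fun s => (hC _).1
      rw [← integral_sub (q _) (q _)]
      exact abs_integral_le_of_abs_le _ fun ω => hrep _
    have hP : ∑ i ∈ A, ∑ j ∈ A.erase i, |∫ ω, Y i ω * Y j ω ∂μ|
        + ∑ i ∈ A, |∫ ω, Y i ω * Y k ω ∂μ| ≤
        ∑ i ∈ insert k A, ∑ j ∈ (insert k A).erase i, |∫ ω, Y i ω * Y j ω ∂μ| := by
      rw [Finset.sum_insert hk, ← Finset.sum_add_distrib]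
      refine le_add_of_nonneg_of_le (Finset.sum_nonneg fun _ _ => abs_nonneg _)
        (Finset.sum_le_sum fun i hi => ?_)
      have hik : k ≠ i := fun e => hk (e ▸ hi)
      rw [Finset.erase_insert_of_ne hik, Finset.sum_insert (by simp [hk]), add_comm]
    have e1 : ∀ ω, ∑ i ∈ insert k A, Y i ω = S ω + Y k ω := fun ω => by
      rw [Finset.sum_insert hk, add_comm]
    simp only [e1]
    rw [Finset.sum_insert hk (f := fun k => (∫ ω, Y k ω ^ 2 ∂μ).toNNReal),
      Finset.sum_insert hk (f := fun k => ∫ ω, |Y k ω| ^ 3 ∂μ)]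
    have c1 := mul_le_mul_of_nonneg_left hP hM
    have c2 := mul_le_mul_of_nonneg_left hcov hM
    simp only [← hv, ← hV, ← hL]
    simp only [hSdef] at *
    rw [mul_add] at c1 ⊢
    rw [abs_le] at hIH hmid hdec ⊢
    constructor <;> linarith

/-! ### The smoothed indicator -/

/-- Integrating a power bound on the derivative: the step that turns the Lipschitz bound on the
second derivative into the third-order Taylor estimate. -/
lemma abs_le_of_abs_deriv_le_pow {f f' : ℝ → ℝ} (hf : ∀ y, HasDerivAt f (f' y) y) (h0 : f 0 = 0)
    {C : ℝ} {n : ℕ} (hb : ∀ y, |f' y| ≤ C * |y| ^ n) (y : ℝ) :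
    |f y| ≤ C / (n + 1) * |y| ^ (n + 1) := by
  have key : ∀ (g g' : ℝ → ℝ), (∀ y, HasDerivAt g (g' y) y) → g 0 = 0 →
      (∀ y, |g' y| ≤ C * |y| ^ n) → ∀ y, 0 ≤ y → |g y| ≤ C / (n + 1) * y ^ (n + 1) := by
    intro g g' hg hg0 hgb y hy
    refine image_norm_le_of_norm_deriv_right_le_deriv_boundary (f := g) (f' := g') (a := 0) (b := y)
      (B := fun t => C / (n + 1) * t ^ (n + 1)) (B' := fun t => C * t ^ n)
      (fun t _ => (hg t).continuousAt.continuousWithinAt) (fun t _ => (hg t).hasDerivWithinAt)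
      (by simp [hg0]) (fun t => ?_) (fun t ht => ?_) (Set.right_mem_Icc.2 hy)
    · have := (hasDerivAt_pow (n + 1) t).const_mul (C / (n + 1))
      refine this.congr_deriv ?_
      push_cast
      have : (n : ℝ) + 1 ≠ 0 := by positivity
      field_simp
    · simpa [abs_of_nonneg ht.1] using hgb t
  rcases le_total 0 y with hy | hy
  · simpa [abs_of_nonneg hy] using key f f' hf h0 hb y hy
  · have := key (fun t => f (-t)) (fun t => -f' (-t))
      (fun t => ((hf (-t)).scomp t (hasDerivAt_neg t)).congr_deriv (by simp)) (by simpa using h0)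
      (fun t => by simpa using hb (-t)) (-y) (by linarith)
    simpa [abs_of_nonpos hy] using this

/-- Projection of the real line onto `[0, 1]`. -/
def clamp (z : ℝ) : ℝ := max 0 (min z 1)

lemma clamp_mem (z : ℝ) : 0 ≤ clamp z ∧ clamp z ≤ 1 := by simp [clamp]

lemma abs_clamp_sub_le (z w : ℝ) : |clamp z - clamp w| ≤ |z - w| := by
  simp only [clamp]; grind

lemma continuous_clamp : Continuous clamp := by unfold clamp; fun_prop

/-- A function with critical points at both `0` and `1` stays differentiable when it is
extended by constants outside `[0, 1]`. -/
lemma hasDerivAt_comp_clamp {p p' : ℝ → ℝ} (hp : ∀ z, HasDerivAt p (p' z) z) (h0 : p' 0 = 0)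
    (h1 : p' 1 = 0) (z : ℝ) : HasDerivAt (fun z => p (clamp z)) (p' (clamp z)) z := by
  by_cases hz : 0 < z ∧ z < 1
  · have e : clamp =ᶠ[nhds z] id := by
      filter_upwards [Ioo_mem_nhds hz.1 hz.2] with w hw
      simp [clamp, hw.1.le, hw.2.le]
    rw [e.eq_of_nhds]
    exact (hp z).congr_of_eventuallyEq (e.fun_comp p)
  · have hz' : p' (clamp z) = 0 := by
      have : clamp z = 0 ∨ clamp z = 1 := by simp only [clamp]; grind
      rcases this with h | h <;> rw [h] <;> assumption
    have h2 := hp (clamp z)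
    rw [hz', hasDerivAt_iff_isLittleO] at h2 ⊢
    simp only [smul_zero, sub_zero] at h2 ⊢
    refine (h2.comp_tendsto continuous_clamp.continuousAt).trans_isBigO ?_
    exact Asymptotics.IsBigO.of_bound 1 (Eventually.of_forall fun w => by
      simpa using abs_clamp_sub_le w z)

/-- The quintic `10 z³ - 15 z⁴ + 6 z⁵` on `[0, 1]`, extended by `0` on the left and `1` on the
right: a twice differentiable step with Lipschitz second derivative. -/
def smoothStep (z : ℝ) : ℝ := 10 * clamp z ^ 3 - 15 * clamp z ^ 4 + 6 * clamp z ^ 5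

/-- The derivative of `smoothStep`. -/
def smoothStep₁ (z : ℝ) : ℝ := 30 * clamp z ^ 2 - 60 * clamp z ^ 3 + 30 * clamp z ^ 4

/-- The second derivative of `smoothStep`. -/
def smoothStep₂ (z : ℝ) : ℝ := 60 * clamp z - 180 * clamp z ^ 2 + 120 * clamp z ^ 3

lemma smoothStep_mem (z : ℝ) : 0 ≤ smoothStep z ∧ smoothStep z ≤ 1 := by
  obtain ⟨h0, h1⟩ := clamp_mem z
  unfold smoothStep
  generalize clamp z = c at *
  constructor
  · have : 10 * c ^ 3 - 15 * c ^ 4 + 6 * c ^ 5 = c ^ 3 * (10 - 15 * c + 6 * c ^ 2) := by ring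
    rw [this]
    exact mul_nonneg (by positivity) (by nlinarith [sq_nonneg (4 * c - 5)])
  · have : 1 - (10 * c ^ 3 - 15 * c ^ 4 + 6 * c ^ 5) =
        (1 - c) ^ 3 * (1 + 3 * c + 6 * c ^ 2) := by ring
    have : 0 ≤ (1 - c) ^ 3 * (1 + 3 * c + 6 * c ^ 2) :=
      mul_nonneg (pow_nonneg (by linarith) 3) (by positivity)
    linarith

lemma smoothStep_of_nonpos {z : ℝ} (hz : z ≤ 0) : smoothStep z = 0 := by
  have : clamp z = 0 := by simp only [clamp]; grind
  simp [smoothStep, this]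

lemma smoothStep_one_sub (z : ℝ) : smoothStep (1 - z) = 1 - smoothStep z := by
  have : clamp (1 - z) = 1 - clamp z := by simp only [clamp]; grind
  simp only [smoothStep, this]
  ring

lemma hasDerivAt_smoothStep (z : ℝ) : HasDerivAt smoothStep (smoothStep₁ z) z := by
  refine hasDerivAt_comp_clamp (p := fun c => 10 * c ^ 3 - 15 * c ^ 4 + 6 * c ^ 5)
    (p' := fun c => 30 * c ^ 2 - 60 * c ^ 3 + 30 * c ^ 4) (fun c => ?_) (by norm_num) (by norm_num) z
  refine ((((hasDerivAt_pow 3 c).const_mul 10).sub ((hasDerivAt_pow 4 c).const_mul 15)).add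
    ((hasDerivAt_pow 5 c).const_mul 6)).congr_deriv ?_
  norm_num
  ring

lemma hasDerivAt_smoothStep₁ (z : ℝ) : HasDerivAt smoothStep₁ (smoothStep₂ z) z := by
  refine hasDerivAt_comp_clamp (p := fun c => 30 * c ^ 2 - 60 * c ^ 3 + 30 * c ^ 4)
    (p' := fun c => 60 * c - 180 * c ^ 2 + 120 * c ^ 3) (fun c => ?_) (by norm_num) (by norm_num) z
  refine ((((hasDerivAt_pow 2 c).const_mul 30).sub ((hasDerivAt_pow 3 c).const_mul 60)).add
    ((hasDerivAt_pow 4 c).const_mul 30)).congr_deriv ?_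
  norm_num
  ring

lemma abs_smoothStep₂_le (z : ℝ) : |smoothStep₂ z| ≤ 15 := by
  obtain ⟨h0, h1⟩ := clamp_mem z
  unfold smoothStep₂
  generalize clamp z = c at *
  have e : 60 * c - 180 * c ^ 2 + 120 * c ^ 3 = 60 * (c * (1 - c)) * (1 - 2 * c) := by ring
  have h2 : 0 ≤ c * (1 - c) := mul_nonneg h0 (by linarith)
  have h3 : c * (1 - c) ≤ 1 / 4 := by nlinarith [sq_nonneg (2 * c - 1)]
  rw [e, abs_mul, abs_of_nonneg (by positivity)]
  have h4 : |1 - 2 * c| ≤ 1 := abs_le.2 ⟨by linarith, by linarith⟩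
  nlinarith [abs_nonneg (1 - 2 * c)]

lemma smoothStep₂_lip (z w : ℝ) : |smoothStep₂ z - smoothStep₂ w| ≤ 60 * |z - w| := by
  refine le_trans ?_ (mul_le_mul_of_nonneg_left (abs_clamp_sub_le z w) (by norm_num))
  obtain ⟨h0, h1⟩ := clamp_mem z
  obtain ⟨k0, k1⟩ := clamp_mem w
  unfold smoothStep₂
  generalize clamp z = a at *
  generalize clamp w = b at *
  have e : 60 * a - 180 * a ^ 2 + 120 * a ^ 3 - (60 * b - 180 * b ^ 2 + 120 * b ^ 3) =
      (60 - 180 * (a + b) + 120 * (a ^ 2 + a * b + b ^ 2)) * (a - b) := by ring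
  rw [e, abs_mul]
  refine mul_le_mul_of_nonneg_right (abs_le.2 ⟨?_, ?_⟩) (abs_nonneg _)
  · nlinarith [sq_nonneg (a - b), sq_nonneg (a + b - 1)]
  · nlinarith [mul_nonneg h0 (sub_nonneg.2 h1), mul_nonneg k0 (sub_nonneg.2 k1),
      mul_nonneg h0 (sub_nonneg.2 k1), mul_nonneg k0 (sub_nonneg.2 h1)]

lemma testTriple_smoothStep : TestTriple 15 10 smoothStep smoothStep₁ smoothStep₂ := by
  have c0 : Continuous smoothStep := by
    have := continuous_clamp; unfold smoothStep; fun_prop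
  have c1 : Continuous smoothStep₁ := by
    have := continuous_clamp; unfold smoothStep₁; fun_prop
  have c2 : Continuous smoothStep₂ := by
    have := continuous_clamp; unfold smoothStep₂; fun_prop
  refine ⟨c0.measurable, c1.measurable, c2.measurable, ⟨30, fun t => ⟨?_, ?_, ?_⟩⟩,
    fun s t => ?_, fun s y => ?_⟩
  · have := smoothStep_mem t
    exact abs_le.2 ⟨by linarith, by linarith⟩
  · obtain ⟨h0, h1⟩ := clamp_mem t
    unfold smoothStep₁
    generalize clamp t = c at *
    have e : 30 * c ^ 2 - 60 * c ^ 3 + 30 * c ^ 4 = 30 * (c * (1 - c)) ^ 2 := by ring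
    have h2 : 0 ≤ c * (1 - c) := mul_nonneg h0 (by linarith)
    have h3 : c * (1 - c) ≤ 1 := by nlinarith
    rw [e, abs_of_nonneg (by positivity)]
    nlinarith
  · exact (abs_smoothStep₂_le t).trans (by norm_num)
  · exact Convex.norm_image_sub_le_of_norm_hasDerivWithin_le (s := Set.univ)
      (fun z _ => (hasDerivAt_smoothStep₁ z).hasDerivWithinAt) (fun z _ => abs_smoothStep₂_le z)
      convex_univ (Set.mem_univ s) (Set.mem_univ t)
  · have d1 : ∀ y, HasDerivAt (fun y => smoothStep₁ (s + y) - smoothStep₁ s - smoothStep₂ s * y)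
        (smoothStep₂ (s + y) - smoothStep₂ s) y := fun y => by
      have := (((hasDerivAt_smoothStep₁ (s + y)).comp_const_add s y).sub_const
        (smoothStep₁ s)).sub ((hasDerivAt_id y).const_mul (smoothStep₂ s))
      exact this.congr_deriv (by simp)
    have b1 := abs_le_of_abs_deriv_le_pow (n := 1) (C := 60) d1 (by simp) (fun y => by
      simpa using smoothStep₂_lip (s + y) s)
    have d0 : ∀ y, HasDerivAt (fun y => smoothStep (s + y) - smoothStep s - smoothStep₁ s * y
        - smoothStep₂ s * (y ^ 2 / 2)) (smoothStep₁ (s + y) - smoothStep₁ s - smoothStep₂ s * y) y :=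
      fun y => by
      have := ((((hasDerivAt_smoothStep (s + y)).comp_const_add s y).sub_const
        (smoothStep s)).sub ((hasDerivAt_id y).const_mul (smoothStep₁ s))).sub
        (((hasDerivAt_pow 2 y).div_const 2).const_mul (smoothStep₂ s))
      exact this.congr_deriv (by simp)
    have b0 := abs_le_of_abs_deriv_le_pow (n := 2) (C := 30) d0 (by simp) (fun y => by
      refine (b1 y).trans (le_of_eq ?_)
      norm_num) y
    refine b0.trans (le_of_eq ?_)
    norm_num

lemma TestTriple.scale {M K : ℝ} {h h₁ h₂ : ℝ → ℝ} (H : TestTriple M K h h₁ h₂) {c : ℝ}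
    (hc : 0 ≤ c) (a : ℝ) :
    TestTriple (M * c ^ 2) (K * c ^ 3) (fun t => h (c * t - a)) (fun t => c * h₁ (c * t - a))
      (fun t => c ^ 2 * h₂ (c * t - a)) := by
  obtain ⟨C, hC⟩ := H.bdd
  have m : Measurable fun t : ℝ => c * t - a := by fun_prop
  have hC0 : 0 ≤ C := (abs_nonneg _).trans (hC 0).1
  refine ⟨H.meas.comp m, (H.meas₁.comp m).const_mul _, (H.meas₂.comp m).const_mul _,
    ⟨C + c * C + c ^ 2 * C, fun t => ?_⟩, fun s t => ?_, fun s y => ?_⟩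
  · obtain ⟨k0, k1, k2⟩ := hC (c * t - a)
    rw [abs_mul, abs_mul, abs_of_nonneg hc, abs_of_nonneg (sq_nonneg c)]
    have l1 := mul_le_mul_of_nonneg_left k1 hc
    have l2 := mul_le_mul_of_nonneg_left k2 (sq_nonneg c)
    have l3 : 0 ≤ c * C := by positivity
    have l4 : 0 ≤ c ^ 2 * C := by positivity
    exact ⟨by linarith, by linarith, by linarith⟩
  · have := H.lip (c * s - a) (c * t - a)
    rw [sub_sub_sub_cancel_right, ← mul_sub, abs_mul, abs_of_nonneg hc] at this
    rw [← mul_sub, abs_mul, abs_of_nonneg hc]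
    calc _ ≤ c * (M * (c * |t - s|)) := by gcongr
      _ = _ := by ring
  · have := H.taylor (c * s - a) (c * y)
    rw [abs_mul, abs_of_nonneg hc] at this
    convert this using 1
    · congr 1
      rw [show c * (s + y) - a = c * s - a + c * y by ring]
      ring
    · ring

open ProbabilityTheory in
/-- The smoothed indicator `t ↦ smoothStep ((t - x) / 2)` climbs from `0` to `1` on `[x, x + 2]`,
symmetrically about `x + 1`. The normal density is larger to the left of `x + 1 > 0` than at the
mirror point on the right, so smoothing the indicator of `(x + 1, ∞)` in this way can only
increase its Gaussian expectation. -/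
lemma one_sub_cdf_le_integral_smoothStep {x : ℝ} (hx : 0 < x) :
    1 - stdNormalCDF (x + 1) ≤ ∫ t, smoothStep ((t - x) / 2) ∂(gaussianReal 0 1) := by
  set c := x + 1 with hc
  set φ := gaussianPDFReal 0 1 with hφ
  set J : ℝ → ℝ := (Set.Ioi c).indicator 1 with hJ
  set F : ℝ → ℝ := fun t => smoothStep ((t - x) / 2) with hF
  set D : ℝ → ℝ := fun t => F t - J t with hD
  have mF : Measurable F := testTriple_smoothStep.meas.comp (by fun_prop)
  have mJ : Measurable J := measurable_one.indicator measurableSet_Ioi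
  have bF : ∀ t, |F t| ≤ 1 := fun t => by
    have := smoothStep_mem ((t - x) / 2)
    exact abs_le.2 ⟨by simp only [hF]; linarith, this.2⟩
  have bJ : ∀ t, |J t| ≤ 1 := fun t => by
    simp only [hJ, Set.indicator, Pi.one_apply]; split_ifs <;> simp
  have bD : ∀ t, |D t| ≤ 2 := fun t => by
    have h1 := abs_le.1 (bF t)
    have h2 := abs_le.1 (bJ t)
    exact abs_le.2 ⟨by simp only [hD]; linarith, by simp only [hD]; linarith⟩
  have iφ : Integrable φ := integrable_gaussianPDFReal 0 1
  have i1 : Integrable (fun t => D t * φ t) :=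
    iφ.bdd_mul (mF.sub mJ).aestronglyMeasurable (Eventually.of_forall bD)
  have i2 : Integrable (fun t => D t * φ (2 * c - t)) :=
    (iφ.comp_sub_left (2 * c)).bdd_mul (mF.sub mJ).aestronglyMeasurable (Eventually.of_forall bD)
  -- `D` is antisymmetric about `c`, except at the point `c` itself.
  have hodd : ∫ t, D t * φ (2 * c - t) = -∫ t, D t * φ t := by
    rw [← integral_sub_left_eq_self (fun t => D t * φ (2 * c - t)) volume (2 * c), ← integral_neg]
    refine integral_congr_ae ?_
    filter_upwards [compl_mem_ae_iff.2 (measure_singleton (μ := volume) c)] with t ht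
    have htc : t ≠ c := ht
    have e1 : F (2 * c - t) = 1 - F t := by
      simp only [hF]
      rw [← smoothStep_one_sub]
      congr 1
      rw [hc]; ring
    have e2 : J (2 * c - t) = 1 - J t := by
      simp only [hJ, Set.indicator, Set.mem_Ioi, Pi.one_apply]
      rcases lt_or_gt_of_ne htc with h | h
      · rw [if_pos (by linarith), if_neg (by linarith)]; ring
      · rw [if_neg (by linarith), if_pos h]; ring
    simp only [hD, e1, e2, sub_sub_cancel]
    ring
  have hpos : ∀ t, 0 ≤ D t * φ t - D t * φ (2 * c - t) := by
    intro t
    have hφt : ∀ a b : ℝ, a ^ 2 ≤ b ^ 2 → φ b ≤ φ a := fun a b hab => by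
      simp only [hφ, gaussianPDFReal]
      gcongr ?_ * ?_
      apply Real.exp_le_exp.2
      simp only [sub_zero, NNReal.coe_one, mul_one]
      linarith
    have hm := smoothStep_mem ((t - x) / 2)
    rw [← mul_sub]
    rcases le_or_gt t c with h | h
    · refine mul_nonneg ?_ (sub_nonneg.2 (hφt _ _ (by nlinarith)))
      have : J t = 0 := by simp [hJ, h]
      simp only [hD, this, hF]; linarith
    · refine mul_nonneg_of_nonpos_of_nonpos ?_ (sub_nonpos.2 (hφt _ _ (by nlinarith)))
      have : J t = 1 := by simp [hJ, h]
      simp only [hD, this, hF]; linarith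
  have h0 : 0 ≤ ∫ t, D t * φ t := by
    have : 0 ≤ ∫ t, (D t * φ t - D t * φ (2 * c - t)) := integral_nonneg fun t => hpos t
    rw [integral_sub i1 i2, hodd] at this
    linarith
  have h1 : ∫ t, D t ∂(gaussianReal 0 1) = ∫ t, D t * φ t := by
    rw [integral_gaussianReal_eq_integral_smul one_ne_zero]
    simp only [smul_eq_mul, mul_comm, hφ]
  have h2 : ∫ t, D t ∂(gaussianReal 0 1) = ∫ t, F t ∂(gaussianReal 0 1) - (1 - stdNormalCDF c) := by
    rw [integral_sub (integrable_of_abs_le mF bF) (integrable_of_abs_le mJ bJ), hJ,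
      integral_indicator_one measurableSet_Ioi, ← Set.compl_Iic,
      probReal_compl_eq_one_sub measurableSet_Iic]
    rfl
  linarith

/-! ### The lower bound -/

/-- **Lower exponential bound for sums of a negatively associated field** (Lemma 2.3).
For all `x > 0`,
`P(T_n ≥ x B_n) ≥ (1 − Φ(x+1)) − 6 B_n⁻² Σ_{1 ≤ i ≠ j ≤ n} |E (Y_i Y_j)|
  − 12 B_n⁻³ Σ_{k ≤ n} E |Y_k|³`. -/
theorem na_field_lower_exponential_bound
    {Ω : Type} [MeasurableSpace Ω] (μ : Measure Ω) [IsProbabilityMeasure μ]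
    (d : ℕ) (n : Fin d → ℕ)
    (Y : (Fin d → ℕ) → Ω → ℝ)
    (hmeas : ∀ k ∈ Finset.Icc (1 : Fin d → ℕ) n, Measurable (Y k))
    (hNA : NegAssocOn μ Y (Set.Icc 1 n))
    (hmean : ∀ k ∈ Finset.Icc (1 : Fin d → ℕ) n, ∫ ω, Y k ω ∂μ = 0)
    (hL3 : ∀ k ∈ Finset.Icc (1 : Fin d → ℕ) n, Integrable (fun ω => |Y k ω| ^ 3) μ)
    (x : ℝ) (hx : 0 < x) :
    (1 - stdNormalCDF (x + 1))
      - 6 * ((Real.sqrt (∑ k ∈ Finset.Icc (1 : Fin d → ℕ) n, ∫ ω, (Y k ω) ^ 2 ∂μ))⁻¹) ^ 2 *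
          (∑ i ∈ Finset.Icc (1 : Fin d → ℕ) n,
            ∑ j ∈ (Finset.Icc (1 : Fin d → ℕ) n).erase i, |∫ ω, Y i ω * Y j ω ∂μ|)
      - 12 * ((Real.sqrt (∑ k ∈ Finset.Icc (1 : Fin d → ℕ) n, ∫ ω, (Y k ω) ^ 2 ∂μ))⁻¹) ^ 3 *
          (∑ k ∈ Finset.Icc (1 : Fin d → ℕ) n, ∫ ω, |Y k ω| ^ 3 ∂μ)
    ≤ (μ {ω | x * Real.sqrt (∑ k ∈ Finset.Icc (1 : Fin d → ℕ) n, ∫ ω', (Y k ω') ^ 2 ∂μ)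
          ≤ ∑ i ∈ Finset.Icc (1 : Fin d → ℕ) n, Y i ω}).toReal := by
  set I := Finset.Icc (1 : Fin d → ℕ) n with hI
  set V := ∑ k ∈ I, ∫ ω, (Y k ω) ^ 2 ∂μ with hV
  set B := √V with hB
  have hnn : ∀ k ∈ I, 0 ≤ ∫ ω, (Y k ω) ^ 2 ∂μ := fun k _ => integral_nonneg fun ω => sq_nonneg _
  have hV0 : 0 ≤ V := Finset.sum_nonneg hnn
  have hB0 : 0 ≤ B := Real.sqrt_nonneg _
  have hgauss := one_sub_cdf_le_integral_smoothStep hx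
  rcases hB0.eq_or_lt with hBz | hBpos
  -- Here `B⁻¹ = 0`, so both error terms vanish, while all `Y k` are null and the event is sure.
  · have hVz : V = 0 := (Real.sqrt_eq_zero hV0).1 hBz.symm
    have hYz : ∀ k ∈ I, Y k =ᵐ[μ] 0 := by
      intro k hk
      have h1 := (Finset.sum_eq_zero_iff_of_nonneg hnn).1 hVz k hk
      have h2 : Integrable (fun ω => Y k ω ^ 2) μ :=
        integrable_pow_of_cube (hmeas k hk).aestronglyMeasurable (hL3 k hk) (by norm_num)
      rw [integral_eq_zero_iff_of_nonneg (fun ω => sq_nonneg _) h2] at h1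
      filter_upwards [h1] with ω hω
      simpa using hω
    have hae : ∀ᵐ ω ∂μ, ω ∈ {ω | x * B ≤ ∑ i ∈ I, Y i ω} := by
      have : ∀ᵐ ω ∂μ, ∀ k ∈ I, Y k ω = 0 := (Finset.eventually_all I).2 hYz
      filter_upwards [this] with ω hω
      rw [← hBz, mul_zero, Finset.sum_eq_zero hω]
    have hone : μ {ω | x * B ≤ ∑ i ∈ I, Y i ω} = 1 :=
      (measure_congr (eventuallyEq_univ.2 hae)).trans measure_univ
    rw [hone, ← hBz]
    have : 0 ≤ stdNormalCDF (x + 1) := ENNReal.toReal_nonneg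
    simp
    exact this
  · set c := (2 * B)⁻¹ with hc
    have hcpos : 0 < c := by positivity
    have H := testTriple_smoothStep.scale hcpos.le (x / 2)
    have hNA' : NegAssocOn μ Y (I : Set (Fin d → ℕ)) := by rw [hI, Finset.coe_Icc]; exact hNA
    have hcmp := gaussian_comparison hmeas hNA' hmean hL3 I subset_rfl _ _ _ H
    have eV : ProbabilityTheory.gaussianReal 0 (∑ k ∈ I, (∫ ω, Y k ω ^ 2 ∂μ).toNNReal) =
        (ProbabilityTheory.gaussianReal 0 1).map (B * ·) := by
      rw [ProbabilityTheory.gaussianReal_map_const_mul, mul_zero]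
      congr 1
      ext
      rw [← Real.toNNReal_sum_of_nonneg hnn]
      simp [hV0, hB, Real.sq_sqrt, ← hV]
    rw [eV, integral_map (by fun_prop) H.meas.aestronglyMeasurable] at hcmp
    have eh : ∀ y : ℝ, c * (B * y) - x / 2 = (y - x) / 2 := fun y => by
      rw [hc]; field_simp
    simp only [eh] at hcmp
    have mT : Measurable fun ω => ∑ i ∈ I, Y i ω := Finset.measurable_sum _ hmeas
    have mset : MeasurableSet {ω | x * B ≤ ∑ i ∈ I, Y i ω} := measurableSet_le measurable_const mT
    have hprob : ∫ ω, smoothStep (c * (∑ i ∈ I, Y i ω) - x / 2) ∂μ ≤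
        (μ {ω | x * B ≤ ∑ i ∈ I, Y i ω}).toReal := by
      have e := integral_indicator_one (μ := μ) mset
      rw [Measure.real] at e
      rw [← e]
      refine integral_mono
        (integrable_of_abs_le (H.meas.comp mT) (C := 1) fun ω => ?_)
        ((integrable_const 1).indicator mset) fun ω => ?_
      · exact abs_le.2 ⟨by linarith [(smoothStep_mem (c * (∑ i ∈ I, Y i ω) - x / 2)).1],
          (smoothStep_mem _).2⟩
      · by_cases hω : x * B ≤ ∑ i ∈ I, Y i ω
        · simpa [Set.indicator, hω] using (smoothStep_mem _).2
        · simp only [Set.indicator, Set.mem_ofPred_eq, hω, if_false]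
          refine (smoothStep_of_nonpos ?_).le
          rw [hc, inv_mul_eq_div, sub_nonpos, div_le_div_iff₀ (by positivity) (by norm_num)]
          nlinarith
    set P := ∑ i ∈ I, ∑ j ∈ I.erase i, |∫ ω, Y i ω * Y j ω ∂μ| with hP
    set Q := ∑ k ∈ I, ∫ ω, |Y k ω| ^ 3 ∂μ with hQ
    have hP0 : 0 ≤ P := Finset.sum_nonneg fun _ _ => Finset.sum_nonneg fun _ _ => abs_nonneg _
    have hQ0 : 0 ≤ Q := Finset.sum_nonneg fun _ _ => integral_nonneg fun _ => by positivity
    have hcB : c = B⁻¹ / 2 := by rw [hc, mul_inv]; ring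
    have l1 : 15 * c ^ 2 * P ≤ 6 * B⁻¹ ^ 2 * P := by
      rw [hcB]
      have : 0 ≤ B⁻¹ ^ 2 * P := by positivity
      nlinarith
    have l2 : 3 * (10 * c ^ 3) * Q ≤ 12 * B⁻¹ ^ 3 * Q := by
      rw [hcB]
      have : 0 ≤ B⁻¹ ^ 3 * Q := by positivity
      nlinarith
    have := (abs_le.1 hcmp).1
    linarith
end
end
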